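/- Let P be a finite poset. For S ⊆ {1,…,ht P}, let P̃_S denote the poset obtained by restricting P to elements whose height is not in S. Then depth k[O(P)] = min{ i + |S| : H̃_{i−1}(O(P̃_S); k) ≠ 0 }. In particular, for any simplicial complex Δ, one computes depth k[Δ] by applying this formula to the face poset of Δ. -/

import Mathlib

open Finset

/-- An abstract simplicial complex on vertex type `V`, given by a finite, downward closed
family of finite subsets of `V` (its faces). -/
structure SComplex (V : Type) [DecidableEq V] where
  faces : Finset (Finset V)
  down_closed : ∀ ⦃s t : Finset V⦄, s ∈ faces → t ⊆ s → t ∈ faces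

namespace SComplex

variable {V : Type} [DecidableEq V]

/-- `K.rank = d = dim k[Δ] = dim Δ + 1` is the maximal cardinality of a face of `K`. -/
def rank (K : SComplex V) : ℕ := K.faces.sup Finset.card

/-- `F` is a facet (maximal face) of `K`. -/
def IsFacet (K : SComplex V) (F : Finset V) : Prop :=
  F ∈ K.faces ∧ ∀ G ∈ K.faces, F ⊆ G → F = G

/-- `K` is pure: all facets have the maximal cardinality `K.rank`. -/
def Pure (K : SComplex V) : Prop := ∀ F : Finset V, K.IsFacet F → F.card = K.rank

/-- The link `lk_K(T) = {G ∈ K | T ∪ G ∈ K, T ∩ G = ∅}`. -/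
def link (K : SComplex V) (T : Finset V) : SComplex V where
  faces := K.faces.filter fun G => Disjoint T G ∧ T ∪ G ∈ K.faces
  down_closed := by
    intro s t hs hts
    simp only [Finset.mem_filter] at hs ⊢
    exact ⟨K.down_closed hs.1 hts, hs.2.1.mono_right hts,
      K.down_closed hs.2.2 (Finset.union_subset_union_right hts)⟩

/-- The anti-star `ast_K(T) = {G ∈ K | T ∩ G = ∅}`. -/
def antistar (K : SComplex V) (T : Finset V) : SComplex V where
  faces := K.faces.filter fun G => Disjoint T G
  down_closed := by
    intro s t hs hts
    simp only [Finset.mem_filter] at hs ⊢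
    exact ⟨K.down_closed hs.1 hts, hs.2.mono_right hts⟩

/-- The induced subcomplex of `K` on a set `W` of vertices. -/
def restrict (K : SComplex V) (W : Finset V) : SComplex V where
  faces := K.faces.filter fun G => G ⊆ W
  down_closed := by
    intro s t hs hts
    simp only [Finset.mem_filter] at hs ⊢
    exact ⟨K.down_closed hs.1 hts, hts.trans hs.2⟩

/-- The subcomplex of faces of cardinality at most `m`; as cardinality = dimension + 1, this is
the `(m-1)`-skeleton `Δ^{(m-1)}`. -/
def skelCard (K : SComplex V) (m : ℕ) : SComplex V where
  faces := K.faces.filter fun G => G.card ≤ m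
  down_closed := by
    intro s t hs hts
    simp only [Finset.mem_filter] at hs ⊢
    exact ⟨K.down_closed hs.1 hts, le_trans (Finset.card_le_card hts) hs.2⟩

/-- `K.trunc j` is `[Δ]_{>j}`, the order complex of the poset of faces of `K` of cardinality
(equivalently, of height in the face poset) `> j`: its faces are the chains of such faces.
For `j = 0` this is the barycentric subdivision of `K`. -/
def trunc (K : SComplex V) (j : ℕ) : SComplex (Finset V) where
  faces := K.faces.powerset.filter fun C =>
    (∀ s ∈ C, j < s.card) ∧ ∀ s ∈ C, ∀ t ∈ C, s ⊆ t ∨ t ⊆ s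
  down_closed := by
    intro s t hs hts
    simp only [Finset.mem_powerset, Finset.mem_filter] at hs ⊢
    exact ⟨hts.trans hs.1, fun a ha => hs.2.1 a (hts ha),
      fun a ha b hb => hs.2.2 a (hts ha) b (hts hb)⟩

/-- `Δ_A`: the complex obtained from `K` by deleting all faces containing a member of `A`. -/
def deleteAbove (K : SComplex V) (A : Finset (Finset V)) : SComplex V where
  faces := K.faces.filter fun s => ∀ τ ∈ A, ¬ τ ⊆ s
  down_closed := by
    intro s t hs hts
    simp only [Finset.mem_filter] at hs ⊢
    exact ⟨K.down_closed hs.1 hts, fun τ hτ hsub => hs.2 τ hτ (hsub.trans hts)⟩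

/-- The number of faces of `K` of cardinality `i`, i.e. the face number `f_{i-1}(K)`. -/
def faceCount (K : SComplex V) (i : ℕ) : ℕ := (K.faces.filter fun s => s.card = i).card

/-- The Euler characteristic `χ(K) = Σ_{i ≥ 0} (-1)^i f_i(K)`. -/
def eulerChar (K : SComplex V) : ℤ :=
  ∑ s ∈ K.faces.filter (fun s => s ≠ ∅), (-1 : ℤ) ^ (s.card - 1)

/-- The reduced Euler characteristic `χ̃(K) = χ(K) - 1`. -/
def reducedEulerChar (K : SComplex V) : ℤ := eulerChar K - 1

end SComplex

/-! ### Simplicial homology with coefficients in a field `k` -/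

/-- An arbitrary linear order on a finite type. -/
noncomputable def arbOrder (V : Type) [Fintype V] : LinearOrder V :=
  LinearOrder.lift' (Fintype.equivFin V) (Equiv.injective _)

namespace SComplex

variable {V : Type} [DecidableEq V]

/-- The faces of `K` of cardinality `n`, as a type. -/
def Faces (K : SComplex V) (n : ℕ) : Type :=
  {s : Finset V // s ∈ K.faces ∧ s.card = n}

/-- The space of reduced simplicial `n`-chains of `K`: formal `k`-linear combinations of the
faces of cardinality `n` (such a face has dimension `n - 1`; the empty face sits in degree `0`,
which produces *reduced* homology). -/
abbrev ChainsOf (k : Type) [Field k] (K : SComplex V) (n : ℕ) : Type := Faces K n →₀ k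

variable (k : Type) [Field k] [Fintype V]

/-- The simplicial boundary map, with signs determined by an arbitrary but fixed linear order
on the vertices. -/
noncomputable def bd (K : SComplex V) (n : ℕ) :
    ChainsOf k K n →ₗ[k] ChainsOf k K (n - 1) :=
  letI : LinearOrder V := arbOrder V
  Finsupp.lsum k fun s : Faces K n =>
    LinearMap.toSpanSingleton k (ChainsOf k K (n - 1))
      (∑ x ∈ s.1.attach,
        ((-1 : k) ^ (s.1.filter (fun y => y < x.1)).card) •
          Finsupp.single
            (⟨s.1.erase x.1,
              K.down_closed s.2.1 (Finset.erase_subset _ _),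
              by rw [Finset.card_erase_of_mem x.2, s.2.2]⟩ : Faces K (n - 1))
            (1 : k))

/-- `HVanish k K i` says that the reduced simplicial homology `H̃_{i-1}(K; k)` vanishes.
Note the indexing convention: the index `i` is the *cardinality* of the relevant faces, so this
is reduced homology in topological degree `i - 1`; e.g. `HVanish k K 1` says `H̃₀(K; k) = 0`
(`K` is connected and nonempty) and `HVanish k K 0` says `H̃₋₁(K; k) = 0` (`K` has a face).
Since the cycles in degree `i - 1` are `ker ∂ᵢ` and the boundaries are `im ∂ᵢ₊₁`, and the
boundaries are always contained in the cycles, vanishing of homology says exactly that every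
cycle is a boundary. -/
def HVanish (K : SComplex V) (i : ℕ) : Prop :=
  LinearMap.ker (bd k K i) ≤ LinearMap.range (bd k K (i + 1))

/-- `redHomologyRank k K i` is the dimension `dim_k H̃_{i-1}(K; k)` of the reduced simplicial
homology of `K` in topological degree `i - 1` (cardinality index `i`), namely the dimension of
the cycles `ker ∂ᵢ` modulo the boundaries `im ∂ᵢ₊₁`. -/
noncomputable def redHomologyRank (K : SComplex V) (i : ℕ) : ℕ :=
  Module.finrank k ↥(LinearMap.ker (bd k K i)) -
    Module.finrank k ↥(LinearMap.range (bd k K (i + 1)) ⊓ LinearMap.ker (bd k K i))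

end SComplex

/-! ### Depth, Serre conditions, and Stanley–Reisner rings -/

/-- The length of a longest regular sequence on `R` contained in the ideal `I`
(the `I`-depth of `R`). -/
noncomputable def depthIn (R : Type) [CommRing R] (I : Ideal R) : ℕ :=
  sSup {n : ℕ | ∃ rs : List R, rs.length = n ∧ (∀ r ∈ rs, r ∈ I) ∧
    RingTheory.Sequence.IsRegular R rs}

/-- Serre's condition `(S_ℓ)` for a commutative ring:
`depth R_p ≥ min {ℓ, dim R_p}` for every prime `p`. -/
def SerreCondS (ℓ : ℕ) (R : Type) [CommRing R] : Prop :=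
  ∀ (p : Ideal R) (hp : p.IsPrime),
    haveI := hp
    min ((ℓ : ℕ∞) : WithBot ℕ∞) (ringKrullDim (Localization.AtPrime p)) ≤
      ((depthIn (Localization.AtPrime p)
        (IsLocalRing.maximalIdeal (Localization.AtPrime p)) : ℕ∞) : WithBot ℕ∞)

namespace SComplex

variable {V : Type} [DecidableEq V] (k : Type) [Field k]

/-- The Stanley–Reisner ideal of `K`: generated by the squarefree monomials supported on
non-faces. -/
noncomputable def srIdeal (K : SComplex V) : Ideal (MvPolynomial V k) :=
  Ideal.span ((fun s : Finset V => ∏ v ∈ s, MvPolynomial.X v) '' {s : Finset V | s ∉ K.faces})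

/-- The Stanley–Reisner ring `k[Δ]`. -/
noncomputable abbrev SRRing (K : SComplex V) : Type := MvPolynomial V k ⧸ srIdeal k K

/-- `depth k[Δ]`: the depth of the Stanley–Reisner ring with respect to its irrelevant
(graded maximal) ideal. -/
noncomputable def srDepth (K : SComplex V) : ℕ :=
  depthIn (SRRing k K)
    (Ideal.span (Set.range fun v : V => Ideal.Quotient.mk (srIdeal k K) (MvPolynomial.X v)))

/-- `k[Δ]` satisfies Serre's condition `(S_ℓ)`. -/
def SerreS (ℓ : ℕ) (K : SComplex V) : Prop := SerreCondS ℓ (SRRing k K)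

end SComplex

/-! ### Order complexes of finite posets -/

/-- The order complex `O(P)` of a finite poset: its faces are the chains of `P`. -/
def orderComplex (P : Type) [DecidableEq P] [Fintype P] [PartialOrder P]
    [∀ a b : P, Decidable (a ≤ b)] : SComplex P where
  faces := Finset.univ.filter fun C : Finset P => ∀ a ∈ C, ∀ b ∈ C, a ≤ b ∨ b ≤ a
  down_closed := by
    intro s t hs hts
    simp only [Finset.mem_filter, Finset.mem_univ, true_and] at hs ⊢
    exact fun a ha b hb => hs a (hts ha) b (hts hb)

/-- The height of an element of a finite poset: the maximal cardinality of a chain with top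
element `p` (so minimal elements have height `1`). -/
def pheight {P : Type} [DecidableEq P] [Fintype P] [PartialOrder P]
    [∀ a b : P, Decidable (a ≤ b)] (p : P) : ℕ :=
  Finset.sup (Finset.univ.filter fun C : Finset P =>
    p ∈ C ∧ (∀ a ∈ C, a ≤ p) ∧ ∀ a ∈ C, ∀ b ∈ C, a ≤ b ∨ b ≤ a) Finset.card

/-- The height `ht P` of a finite poset: the maximal cardinality of a chain. -/
def pheightMax (P : Type) [DecidableEq P] [Fintype P] [PartialOrder P]
    [∀ a b : P, Decidable (a ≤ b)] : ℕ :=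
  Finset.univ.sup (pheight (P := P))

/-- `O(P_{>j})`: the full subcomplex of the order complex on the elements of height `> j`. -/
def ocAbove (P : Type) [DecidableEq P] [Fintype P] [PartialOrder P]
    [∀ a b : P, Decidable (a ≤ b)] (j : ℕ) : SComplex P :=
  (orderComplex P).restrict (Finset.univ.filter fun p => j < pheight p)

/-- The face poset `F(Δ)` of a simplicial complex: the nonempty faces, ordered by inclusion. -/
abbrev SComplex.FacePoset {V : Type} [DecidableEq V] (K : SComplex V) : Type :=
  {s : Finset V // s ∈ K.faces ∧ s ≠ ∅}

instance {V : Type} [DecidableEq V] (K : SComplex V) :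
    ∀ a b : K.FacePoset, Decidable (a ≤ b) := fun a b =>
  decidable_of_iff (a.1 ≤ b.1) Subtype.coe_le_coe

/-! ### Koszul cohomology -/

section Koszul

open scoped Pointwise

variable {ι R M N L : Type*} [DecidableEq ι] [CommRing R]
  [AddCommGroup M] [Module R M] [AddCommGroup N] [Module R N] [AddCommGroup L] [Module R L]

/-- The sign of `j` with respect to `T`, for the order on indices induced by `o`. -/
def koszulSign (o : ι → ℕ) (T : Finset ι) (j : ι) : ℤ :=
  (-1) ^ #{l ∈ T | o l < o j}

/-- The Koszul differential. -/
def koszulD (o : ι → ℕ) (θ : ι → R) (f : Finset ι → M) (T : Finset ι) : M :=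
  ∑ j ∈ T, koszulSign o T j • θ j • f (T.erase j)

/-- Vanishing of the Koszul cohomology of `M` with respect to `θ` in degree `i`. -/
def KoszulVanish (o : ι → ℕ) (θ : ι → R) (M : Type*) [AddCommGroup M] [Module R M]
    (i : ℕ) : Prop :=
  ∀ f : Finset ι → M, (∀ T, #T = i + 1 → koszulD o θ f T = 0) →
    ∃ g : Finset ι → M, ∀ T, #T = i → f T = koszulD o θ g T

omit [DecidableEq ι] in
theorem koszulSign_mul_self (o : ι → ℕ) (T : Finset ι) (j : ι) :
    koszulSign o T j * koszulSign o T j = 1 := by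
  rw [koszulSign, ← mul_pow]; simp

theorem koszulSign_erase (o : ι → ℕ) {T : Finset ι} {j : ι} (hj : j ∈ T) (l : ι) :
    koszulSign o (T.erase j) l = (if o j < o l then -1 else 1) * koszulSign o T l := by
  unfold koszulSign
  rw [filter_erase]
  split_ifs with h
  · have hm : j ∈ T.filter (fun x => o x < o l) := by simp [hj, h]
    rw [← card_erase_add_one hm, pow_succ]; ring
  · rw [erase_eq_of_notMem (by simp [h]), one_mul]

theorem koszulSign_anticomm {o : ι → ℕ} (ho : Function.Injective o) {T : Finset ι} {j l : ι}
    (hj : j ∈ T) (hl : l ∈ T) (hjl : j ≠ l) :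
    koszulSign o T j * koszulSign o (T.erase j) l =
      -(koszulSign o T l * koszulSign o (T.erase l) j) := by
  rw [koszulSign_erase o hj, koszulSign_erase o hl]
  have := ho.ne hjl
  rcases lt_or_gt_of_ne this with h | h
  · rw [if_pos h, if_neg (by omega)]; ring
  · rw [if_neg (by omega), if_pos h]; ring

theorem koszulSign_mul_koszulSign_insert {o : ι → ℕ} (ho : Function.Injective o) {T : Finset ι}
    {j l : ι} (hj : j ∉ T) (hl : l ∈ T) :
    koszulSign o T l * koszulSign o ((insert j T).erase l) j =
      -(koszulSign o (insert j T) j * koszulSign o (insert j T) l) := by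
  have hjl : j ≠ l := fun h => hj (h ▸ hl)
  have h3 := koszulSign_anticomm ho (mem_insert_self j T) (mem_insert_of_mem hl) hjl
  rw [erase_insert hj] at h3
  have h5 := koszulSign_mul_self o (insert j T) l
  have h6 := koszulSign_mul_self o T l
  generalize koszulSign o (insert j T) l = a at *
  generalize koszulSign o T l = b at *
  generalize koszulSign o (insert j T) j = c at *
  generalize koszulSign o ((insert j T).erase l) j = e at *
  linear_combination (a * b) * h3 - a * c * h6 + (- e * b) * h5

theorem koszulD_add (o : ι → ℕ) (θ : ι → R) (f g : Finset ι → M) (T : Finset ι) :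
    koszulD o θ (fun T => f T + g T) T = koszulD o θ f T + koszulD o θ g T := by
  simp [koszulD, sum_add_distrib]

theorem koszulD_sub (o : ι → ℕ) (θ : ι → R) (f g : Finset ι → M) (T : Finset ι) :
    koszulD o θ (fun T => f T - g T) T = koszulD o θ f T - koszulD o θ g T := by
  simp [koszulD, sum_sub_distrib, smul_sub]

theorem koszulD_map (o : ι → ℕ) (θ : ι → R) (a : M →ₗ[R] N) (f : Finset ι → M)
    (T : Finset ι) :
    koszulD o θ (fun T => a (f T)) T = a (koszulD o θ f T) := by
  simp [koszulD]

theorem koszulD_smul (o : ι → ℕ) (θ : ι → R) (r : R) (f : Finset ι → M) (T : Finset ι) :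
    koszulD o θ (fun T => r • f T) T = r • koszulD o θ f T :=
  koszulD_map o θ (LinearMap.lsmul R M r) f T

theorem koszulD_congr (o : ι → ℕ) (θ : ι → R) {f g : Finset ι → M} {i : ℕ}
    (h : ∀ T, #T = i → f T = g T) {T : Finset ι} (hT : #T = i + 1) :
    koszulD o θ f T = koszulD o θ g T :=
  sum_congr rfl fun j hj => by rw [h _ (by rw [card_erase_of_mem hj, hT]; rfl)]

theorem koszulD_koszulD {o : ι → ℕ} (ho : Function.Injective o) (θ : ι → R)
    (f : Finset ι → M) (T : Finset ι) :
    koszulD o θ (koszulD o θ f) T = 0 := by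
  simp only [koszulD, smul_sum]
  rw [sum_sigma']
  refine sum_involution (fun x _ => ⟨x.2, x.1⟩) ?_ ?_ ?_ ?_
  · rintro ⟨j, l⟩ h
    simp only [mem_sigma, mem_erase] at h
    rw [erase_right_comm, smul_comm (θ j) (koszulSign _ _ _), smul_comm (θ l) (koszulSign _ _ _),
      smul_comm (θ j) (θ l)]
    simp only [smul_smul]
    rw [koszulSign_anticomm ho h.1 h.2.2 (Ne.symm h.2.1), neg_smul, neg_add_cancel]
  · rintro ⟨j, l⟩ h _ he
    simp only [mem_sigma, mem_erase] at h
    exact h.2.1 (congrArg Sigma.fst he)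
  · rintro ⟨j, l⟩ h
    simp only [mem_sigma, mem_erase] at h ⊢
    exact ⟨h.2.2, Ne.symm h.2.1, h.1⟩
  · intro _ _; rfl

/-- Multiplication by `θ j` is null-homotopic on the Koszul complex. -/
theorem exists_smul_eq_koszulD {o : ι → ℕ} (ho : Function.Injective o) (θ : ι → R)
    {f : Finset ι → M} {i : ℕ} (hf : ∀ T, #T = i + 1 → koszulD o θ f T = 0) (j : ι) :
    ∃ g : Finset ι → M, ∀ T, #T = i → θ j • f T = koszulD o θ g T := by
  refine ⟨fun T => if j ∈ T then 0 else koszulSign o (insert j T) j • f (insert j T), ?_⟩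
  intro T hT
  unfold koszulD
  beta_reduce
  by_cases hj : j ∈ T
  · rw [← add_sum_erase _ _ hj, sum_eq_zero, add_zero]
    · rw [if_neg (notMem_erase _ _), insert_erase hj, smul_comm (θ j), smul_smul,
        koszulSign_mul_self, one_smul]
    · intro l hl
      rw [if_pos (mem_erase.2 ⟨(ne_of_mem_erase hl).symm, hj⟩), smul_zero, smul_zero]
  · have h := hf (insert j T) (by rw [card_insert_of_notMem hj, hT])
    unfold koszulD at h
    rw [sum_insert hj, erase_insert hj] at h
    have h2 := congrArg (fun x => koszulSign o (insert j T) j • x) h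
    simp only [smul_add, smul_zero, smul_smul, koszulSign_mul_self, one_smul] at h2
    rw [eq_neg_of_add_eq_zero_left h2, smul_sum, ← sum_neg_distrib]
    refine sum_congr rfl fun l hl => ?_
    have hlj : l ≠ j := fun h => hj (h ▸ hl)
    rw [if_neg (fun h => hj (mem_of_mem_erase h)), ← erase_insert_of_ne hlj.symm]
    rw [smul_comm (θ l) (koszulSign _ _ _), smul_smul, smul_smul,
      koszulSign_mul_koszulSign_insert ho hj hl, neg_smul]

theorem exists_smul_eq_koszulD_of_mem {o : ι → ℕ} (ho : Function.Injective o) (θ : ι → R)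
    {f : Finset ι → M} {i : ℕ} (hf : ∀ T, #T = i + 1 → koszulD o θ f T = 0)
    {r : R} (hr : r ∈ Ideal.span (Set.range θ)) :
    ∃ g : Finset ι → M, ∀ T, #T = i → r • f T = koszulD o θ g T := by
  induction hr using Submodule.span_induction with
  | mem x h =>
    obtain ⟨j, rfl⟩ := h
    exact exists_smul_eq_koszulD ho θ hf j
  | zero => exact ⟨fun _ => 0, fun T _ => by simp [koszulD]⟩
  | add x y _ _ hx hy =>
    obtain ⟨g, hg⟩ := hx
    obtain ⟨g', hg'⟩ := hy
    exact ⟨fun T => g T + g' T, fun T hT => by rw [koszulD_add, add_smul, hg T hT, hg' T hT]⟩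
  | smul a x _ hx =>
    obtain ⟨g, hg⟩ := hx
    exact ⟨fun T => a • g T, fun T hT => by
      rw [koszulD_smul, ← hg T hT, smul_eq_mul, mul_smul]⟩

/-! ### The long exact sequence -/

section Exact

variable {o : ι → ℕ} (ho : Function.Injective o) {θ : ι → R}
  {a : M →ₗ[R] N} {b : N →ₗ[R] L}
  (ha : Function.Injective a) (hb : Function.Surjective b) (hab : Function.Exact a b)

include ho ha hb hab

theorem exists_eq_koszulD_of_map_eq {i : ℕ} (hL : ∀ j, j + 1 = i → KoszulVanish o θ L j)
    {f : Finset ι → M} {g : Finset ι → N} (hfg : ∀ T, #T = i → a (f T) = koszulD o θ g T) :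
    ∃ w : Finset ι → M, ∀ T, #T = i → f T = koszulD o θ w T := by
  rcases i with _ | i
  · refine ⟨fun _ => 0, fun T hT => ha ?_⟩
    rw [hfg T hT, card_eq_zero.1 hT]
    simp [koszulD]
  · obtain ⟨u, hu⟩ := hL i rfl (fun T => b (g T)) (fun T hT => by
      rw [koszulD_map, ← hfg T hT, hab.apply_apply_eq_zero])
    choose u' hu' using fun T => hb (u T)
    have h1 : ∀ T, ∃ w, #T = i → a w = g T - koszulD o θ u' T := by
      intro T
      by_cases hT : #T = i
      · have := (hab (g T - koszulD o θ u' T)).1 (by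
          rw [map_sub, hu T hT, ← koszulD_map]
          simp only [hu', sub_self])
        obtain ⟨w, hw⟩ := this
        exact ⟨w, fun _ => hw⟩
      · exact ⟨0, fun h => absurd h hT⟩
    choose w hw using h1
    refine ⟨w, fun T hT => ha ?_⟩
    rw [hfg T hT, ← koszulD_map, koszulD_congr o θ hw hT, koszulD_sub, koszulD_koszulD ho,
      sub_zero]

theorem koszulVanish_left {i : ℕ} (hN : KoszulVanish o θ N i)
    (hL : ∀ j, j + 1 = i → KoszulVanish o θ L j) : KoszulVanish o θ M i := by
  intro f hf
  obtain ⟨g, hg⟩ := hN (fun T => a (f T)) (fun T hT => by rw [koszulD_map, hf T hT, map_zero])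
  exact exists_eq_koszulD_of_map_eq ho ha hb hab hL hg

theorem koszulVanish_right {i : ℕ} (hN : KoszulVanish o θ N i)
    (hM : KoszulVanish o θ M (i + 1)) : KoszulVanish o θ L i := by
  intro f hf
  choose f' hf' using fun T => hb (f T)
  have h1 : ∀ T, ∃ w, #T = i + 1 → a w = koszulD o θ f' T := by
    intro T
    by_cases hT : #T = i + 1
    · obtain ⟨w, hw⟩ := (hab (koszulD o θ f' T)).1 (by
        rw [← koszulD_map]; simp only [hf', hf T hT])
      exact ⟨w, fun _ => hw⟩
    · exact ⟨0, fun h => absurd h hT⟩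
  choose w hw using h1
  obtain ⟨g, hg⟩ := hM w (fun T hT => ha (by
    rw [← koszulD_map, koszulD_congr o θ hw hT, koszulD_koszulD ho, map_zero]))
  obtain ⟨u, hu⟩ := hN (fun T => f' T - a (g T)) (fun T hT => by
    rw [koszulD_sub, koszulD_map, ← hg T hT, hw T hT, sub_self])
  refine ⟨fun T => b (u T), fun T hT => ?_⟩
  rw [koszulD_map, ← hu T hT, map_sub, hf', hab.apply_apply_eq_zero, sub_zero]

omit ha in
theorem koszulVanish_middle {i : ℕ} (hM : KoszulVanish o θ M i)
    (hL : KoszulVanish o θ L i) (ha : Function.Injective a) : KoszulVanish o θ N i := by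
  intro f hf
  obtain ⟨u, hu⟩ := hL (fun T => b (f T)) (fun T hT => by rw [koszulD_map, hf T hT, map_zero])
  choose u' hu' using fun T => hb (u T)
  have h1 : ∀ T, ∃ w, #T = i → a w = f T - koszulD o θ u' T := by
    intro T
    by_cases hT : #T = i
    · obtain ⟨w, hw⟩ := (hab (f T - koszulD o θ u' T)).1 (by
        rw [map_sub, hu T hT, ← koszulD_map]; simp only [hu', sub_self])
      exact ⟨w, fun _ => hw⟩
    · exact ⟨0, fun h => absurd h hT⟩
  choose w hw using h1
  obtain ⟨g, hg⟩ := hM w (fun T hT => ha (by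
    rw [← koszulD_map, koszulD_congr o θ hw hT, koszulD_sub, hf T hT, koszulD_koszulD ho,
      sub_zero, map_zero]))
  refine ⟨fun T => u' T + a (g T), fun T hT => ?_⟩
  rw [koszulD_add, koszulD_map, ← hg T hT, hw T hT, add_sub_cancel]

end Exact

/-! ### Depth sensitivity -/

theorem koszulVanish_of_quotSMulTop {o : ι → ℕ} (ho : Function.Injective o) {θ : ι → R} {r : R}
    (hr : r ∈ (Ideal.span (Set.range θ)).radical) (hreg : IsSMulRegular M r) {i : ℕ}
    (h : ∀ j, j + 1 = i → KoszulVanish o θ (QuotSMulTop r M) j) : KoszulVanish o θ M i := by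
  obtain ⟨N, hN⟩ := hr
  intro f hf
  have key : ∀ n (g : Finset ι → M), (∀ T, #T = i → r ^ n • f T = koszulD o θ g T) →
      ∃ w : Finset ι → M, ∀ T, #T = i → f T = koszulD o θ w T := by
    intro n
    induction n with
    | zero => exact fun g hg => ⟨g, fun T hT => by rw [← hg T hT, pow_zero, one_smul]⟩
    | succ n ih =>
      intro g hg
      obtain ⟨w, hw⟩ := exists_eq_koszulD_of_map_eq ho
        (a := LinearMap.lsmul R M r) (b := Submodule.mkQ (r • (⊤ : Submodule R M)))
        hreg (Submodule.mkQ_surjective _) (by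
          intro x
          rw [Submodule.mkQ_apply, Submodule.Quotient.mk_eq_zero,
            Submodule.mem_smul_pointwise_iff_exists]
          simp) h (f := fun T => r ^ n • f T) (g := g) (fun T hT => by
            rw [← hg T hT, LinearMap.lsmul_apply, smul_smul, pow_succ'])
      exact ih w hw
  obtain ⟨g, hg⟩ := exists_smul_eq_koszulD_of_mem ho θ hf hN
  exact key N g hg

theorem koszulVanish_quotSMulTop {o : ι → ℕ} (ho : Function.Injective o) {θ : ι → R} {r : R}
    (hreg : IsSMulRegular M r) {i : ℕ} (h : KoszulVanish o θ M i)
    (h' : KoszulVanish o θ M (i + 1)) : KoszulVanish o θ (QuotSMulTop r M) i :=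
  koszulVanish_right ho (a := LinearMap.lsmul R M r)
    (b := Submodule.mkQ (r • (⊤ : Submodule R M))) hreg (Submodule.mkQ_surjective _) (by
      intro x
      rw [Submodule.mkQ_apply, Submodule.Quotient.mk_eq_zero,
        Submodule.mem_smul_pointwise_iff_exists]
      simp) h h'

end Koszul

theorem koszulVanish_of_isWeaklyRegular {ι R : Type*} [DecidableEq ι] [CommRing R]
    {o : ι → ℕ} (ho : Function.Injective o) {θ : ι → R}
    (rs : List R) : ∀ (M : Type*) [AddCommGroup M] [Module R M],
    (∀ r ∈ rs, r ∈ (Ideal.span (Set.range θ)).radical) →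
    RingTheory.Sequence.IsWeaklyRegular M rs → ∀ i < rs.length, KoszulVanish o θ M i := by
  induction rs with
  | nil => intro M _ _ _ _ i hi; simp at hi
  | cons r rs ih =>
    intro M _ _ hmem hreg i hi
    rw [RingTheory.Sequence.isWeaklyRegular_cons_iff] at hreg
    refine koszulVanish_of_quotSMulTop ho (hmem r (by simp)) hreg.1 ?_
    rintro j rfl
    exact ih (QuotSMulTop r M) (fun s hs => hmem s (by simp [hs])) hreg.2 j (by simpa using hi)

theorem exists_isWeaklyRegular_of_koszulVanish {ι R : Type*} [DecidableEq ι] [CommRing R]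
    [IsNoetherianRing R] {o : ι → ℕ} (ho : Function.Injective o) {θ : ι → R} (n : ℕ) :
    ∀ (M : Type*) [AddCommGroup M] [Module R M] [Module.Finite R M],
    (∀ i < n, KoszulVanish o θ M i) →
    ∃ rs : List R, rs.length = n ∧ (∀ r ∈ rs, r ∈ Ideal.span (Set.range θ)) ∧
      RingTheory.Sequence.IsWeaklyRegular M rs := by
  induction n with
  | zero => exact fun M _ _ _ _ => ⟨[], rfl, by simp, .nil R M⟩
  | succ n ih =>
    intro M _ _ _ h
    obtain ⟨r, hrJ, hreg⟩ : ∃ r ∈ Ideal.span (Set.range θ), IsSMulRegular M r := by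
      by_contra! hcon
      cases subsingleton_or_nontrivial M
      · exact hcon 0 (zero_mem _) .zero
      obtain ⟨q, hq⟩ := associatedPrimes.nonempty R M
      obtain ⟨p, hp, hJp⟩ := (Ideal.subset_union_prime_finite (associatedPrimes.finite R M)
        (f := id) (I := Ideal.span (Set.range θ)) q q
        (fun I hin _ _ => IsAssociatedPrime.isPrime hin)).mp (by
          simp only [id]
          rw [biUnion_associatedPrimes_eq_compl_regular R M]
          exact fun r hr => hcon r hr)
      obtain ⟨hprime, x, hx⟩ := isAssociatedPrime_iff.mp hp
      have hx0 : x = 0 := by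
        obtain ⟨g, hg⟩ := h 0 (Nat.succ_pos n) (fun _ => x) (fun T _ => by
          refine sum_eq_zero fun j _ => ?_
          have : θ j ∈ p := hJp (Ideal.subset_span ⟨j, rfl⟩)
          rw [hx, Submodule.mem_colon_singleton, Submodule.mem_bot] at this
          rw [this, smul_zero])
        have := hg ∅ rfl
        simpa [koszulD] using this
      apply hprime.ne_top
      rw [hx, hx0, Ideal.eq_top_iff_one]
      simp
    obtain ⟨rs, hlen, hmem, hrs⟩ := ih (QuotSMulTop r M) (fun i hi =>
      koszulVanish_quotSMulTop ho hreg (h i (by omega)) (h (i + 1) (by omega)))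
    refine ⟨r :: rs, by simp [hlen], ?_, ?_⟩
    · simpa using ⟨hrJ, hmem⟩
    · rw [RingTheory.Sequence.isWeaklyRegular_cons_iff]
      exact ⟨hreg, hrs⟩

/-! ### Signed simplicial cochains -/

theorem koszulSign_eq_prod {ι : Type*} (o : ι → ℕ) (T : Finset ι) (j : ι) :
    koszulSign o T j = ∏ l ∈ T, if o l < o j then -1 else 1 := by
  simp [koszulSign, prod_ite]

namespace SComplex

variable {V : Type} [DecidableEq V] (k : Type) [Field k]

variable {k} in
/-- The simplicial coboundary with incidence signs `s`. -/
def signedD (s : Finset V → V → ℤ) (φ : Finset V → k) (σ : Finset V) : k :=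
  ∑ v ∈ σ, s σ v • φ (σ.erase v)

/-- Vanishing of the reduced cohomology of `K`, computed with incidence signs `s`, where `i` is
the cardinality of the relevant faces. -/
def CochainVanish (s : Finset V → V → ℤ) (K : SComplex V) (i : ℕ) : Prop :=
  ∀ φ : Finset V → k, (∀ σ ∈ K.faces, #σ = i + 1 → signedD s φ σ = 0) →
    ∃ ψ : Finset V → k, ∀ σ ∈ K.faces, #σ = i → φ σ = signedD s ψ σ

variable {k}

theorem CochainVanish.of_sign {s s' : Finset V → V → ℤ} {K : SComplex V} {i : ℕ}
    (ε : Finset V → ℤ) (hε : ∀ σ, ε σ * ε σ = 1)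
    (h : ∀ σ ∈ K.faces, ∀ v ∈ σ, s σ v * ε σ = s' σ v * ε (σ.erase v))
    (hs : CochainVanish k s K i) : CochainVanish k s' K i := by
  intro φ hφ
  obtain ⟨ψ, hψ⟩ := hs (fun σ => ε σ • φ σ) (fun σ hσ hi => by
    have : signedD s (fun σ => ε σ • φ σ) σ = ε σ • signedD s' φ σ := by
      unfold signedD
      rw [smul_sum]
      refine sum_congr rfl fun v hv => ?_
      rw [smul_smul, smul_smul]
      congr 1
      linear_combination ε σ * ε (σ.erase v) * h σ hσ v hv - s σ v * ε (σ.erase v) * hε σ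
        + s' σ v * ε σ * hε (σ.erase v)
    rw [this, hφ σ hσ hi, smul_zero])
  refine ⟨fun σ => ε σ • ψ σ, fun σ hσ hi => ?_⟩
  have h1 := congrArg (fun x => ε σ • x) (hψ σ hσ hi)
  simp only [smul_smul, hε, one_smul] at h1
  rw [h1]
  unfold signedD
  rw [smul_sum]
  refine sum_congr rfl fun v hv => ?_
  rw [smul_smul, smul_smul, mul_comm (ε σ), h σ hσ v hv]

theorem cochainVanish_iff_of_sign {s s' : Finset V → V → ℤ} {K : SComplex V} {i : ℕ}
    (ε : Finset V → ℤ) (hε : ∀ σ, ε σ * ε σ = 1)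
    (h : ∀ σ ∈ K.faces, ∀ v ∈ σ, s σ v * ε σ = s' σ v * ε (σ.erase v)) :
    CochainVanish k s K i ↔ CochainVanish k s' K i := by
  refine ⟨.of_sign ε hε h, .of_sign ε hε fun σ hσ v hv => ?_⟩
  linear_combination (-(ε σ * ε (σ.erase v))) * h σ hσ v hv + s σ v * ε (σ.erase v) * hε σ
    - s' σ v * ε σ * hε (σ.erase v)

/-- Reduced cohomology does not depend on the orientations of the faces. -/
theorem cochainVanish_koszulSign_iff {o o' : V → ℕ} {K : SComplex V} {i : ℕ}
    (ho : ∀ σ ∈ K.faces, Set.InjOn o σ) (ho' : ∀ σ ∈ K.faces, Set.InjOn o' σ) :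
    CochainVanish k (koszulSign o) K i ↔ CochainVanish k (koszulSign o') K i := by
  let t : V → V → ℤ := fun x y => if o x < o y ∧ o' y < o' x then -1 else 1
  have ht : ∀ x y, t x y * t x y = 1 := fun x y => by simp only [t]; split_ifs <;> rfl
  refine cochainVanish_iff_of_sign (fun σ => ∏ x ∈ σ, ∏ y ∈ σ, t x y) (fun σ => ?_) ?_
  · simp only [← prod_mul_distrib, ht, prod_const_one]
  · intro σ hσ v hv
    have h1 : ∏ x ∈ σ, ∏ y ∈ σ, t x y = (∏ y ∈ σ.erase v, t v y * t y v) *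
        ∏ x ∈ σ.erase v, ∏ y ∈ σ.erase v, t x y := by
      rw [← mul_prod_erase σ _ hv, ← mul_prod_erase σ (fun y => t v y) hv,
        prod_congr rfl fun x _ => (mul_prod_erase σ (fun y => t x y) hv).symm,
        prod_mul_distrib, prod_mul_distrib]
      simp only [t, lt_self_iff_false, false_and, if_false]
      ring
    rw [h1, ← mul_assoc]
    congr 1
    rw [koszulSign_eq_prod, koszulSign_eq_prod, ← mul_prod_erase σ _ hv,
      ← mul_prod_erase σ (fun l => if o' l < o' v then (-1 : ℤ) else 1) hv]
    simp only [lt_self_iff_false, if_false, one_mul]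
    rw [← prod_mul_distrib]
    refine prod_congr rfl fun y hy => ?_
    have hyσ := mem_of_mem_erase hy
    have h2 : o y ≠ o v := fun h => ne_of_mem_erase hy (ho σ hσ hyσ hv h)
    have h3 : o' y ≠ o' v := fun h => ne_of_mem_erase hy (ho' σ hσ hyσ hv h)
    simp only [t]
    rcases lt_or_gt_of_ne h2 with a | a <;> rcases lt_or_gt_of_ne h3 with b | b <;>
      simp [a, b, a.not_gt, b.not_gt]

/-- The incidence signs induced by a colouring `c` and a set `S` of further colours. -/
def colorSign {ι : Type} [DecidableEq ι] (o : ι → ℕ) (c : V → ι) (S : Finset ι)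
    (σ : Finset V) (v : V) : ℤ :=
  koszulSign o (S ∪ σ.image c) (c v)

theorem cochainVanish_colorSign_iff {ι : Type} [DecidableEq ι] {o : ι → ℕ} {c : V → ι}
    {K : SComplex V} (hc : ∀ σ ∈ K.faces, Set.InjOn c σ) {S : Finset ι}
    (hS : ∀ σ ∈ K.faces, ∀ v ∈ σ, c v ∉ S) {i : ℕ} :
    CochainVanish k (colorSign o c S) K i ↔ CochainVanish k (koszulSign (o ∘ c)) K i := by
  symm
  refine cochainVanish_iff_of_sign (fun σ => ∏ v ∈ σ, koszulSign o S (c v)) (fun σ => ?_) ?_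
  · rw [← prod_mul_distrib]
    exact prod_eq_one fun v _ => koszulSign_mul_self _ _ _
  · intro σ hσ v hv
    rw [← mul_prod_erase σ _ hv, ← mul_assoc]
    congr 1
    rw [colorSign, koszulSign_eq_prod o (S ∪ _), prod_union, prod_image (hc σ hσ),
      ← koszulSign_eq_prod, mul_comm, koszulSign_eq_prod (o ∘ c)]
    · rfl
    · rw [Finset.disjoint_right]
      intro j hj
      obtain ⟨w, hw, rfl⟩ := mem_image.1 hj
      exact hS σ hσ w hw

/-! ### Homology and cohomology -/

variable (k) in
/-- The linear functional on simplicial chains given by a function on faces. -/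
noncomputable def chainEval (K : SComplex V) (n : ℕ) (φ : Finset V → k) :
    Module.Dual k (ChainsOf k K n) :=
  Finsupp.linearCombination k fun s : Faces K n => φ s.1

theorem chainEval_single (K : SComplex V) (n : ℕ) (φ : Finset V → k) (s : Faces K n) :
    chainEval k K n φ (Finsupp.single s 1) = φ s.1 := by
  simp [chainEval]

theorem exists_eq_chainEval (K : SComplex V) (n : ℕ) (η : Module.Dual k (ChainsOf k K n)) :
    ∃ φ : Finset V → k, η = chainEval k K n φ := by
  refine ⟨fun s => if h : s ∈ K.faces ∧ s.card = n then
    η (Finsupp.single (⟨s, h⟩ : Faces K n) 1) else 0, ?_⟩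
  refine Finsupp.lhom_ext' fun s => LinearMap.ext_ring ?_
  simp only [LinearMap.comp_apply, Finsupp.lsingle_apply, chainEval_single]
  rw [dif_pos s.2]
  rfl

section Homology

variable [Fintype V]

variable (V) in
/-- The enumeration of the vertices underlying `arbOrder`. -/
noncomputable def arbIndex (v : V) : ℕ := Fintype.equivFin V v

omit [DecidableEq V] in
theorem arbIndex_injective : Function.Injective (arbIndex V) :=
  Fin.val_injective.comp (Fintype.equivFin V).injective

theorem chainEval_bd (K : SComplex V) (n : ℕ) (φ : Finset V → k) (s : Faces K n) :
    chainEval k K (n - 1) φ (bd k K n (Finsupp.single s 1)) =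
      signedD (koszulSign (arbIndex V)) φ s.1 := by
  rw [bd, Finsupp.lsum_single, LinearMap.toSpanSingleton_apply, one_smul, signedD, ← sum_attach]
  refine (map_sum (chainEval k K (n - 1) φ) _ _).trans (sum_congr rfl fun x _ => ?_)
  refine (LinearMap.map_smul (chainEval k K (n - 1) φ) _ _).trans ?_
  refine (congrArg _ (chainEval_single K (n - 1) φ _)).trans ?_
  rw [koszulSign, zsmul_eq_mul, smul_eq_mul]
  push_cast
  congr!

theorem hVanish_iff_cochainVanish (K : SComplex V) (i : ℕ) :
    HVanish k K i ↔ CochainVanish k (koszulSign (arbIndex V)) K i := by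
  have h1 : HVanish k K i ↔
      LinearMap.ker (bd k K (i + 1)).dualMap ≤ LinearMap.range (bd k K i).dualMap := by
    rw [LinearMap.ker_dualMap_eq_dualAnnihilator_range,
      LinearMap.range_dualMap_eq_dualAnnihilator_ker]
    exact Subspace.dualAnnihilator_le_dualAnnihilator_iff.symm
  rw [h1]
  constructor
  · intro h φ hφ
    obtain ⟨η, hη⟩ := h (show chainEval k K i φ ∈ _ by
      rw [LinearMap.mem_ker]
      refine Finsupp.lhom_ext' fun s => LinearMap.ext_ring ?_
      exact (chainEval_bd K (i + 1) φ s).trans (hφ s.1 s.2.1 s.2.2))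
    obtain ⟨ψ, rfl⟩ := exists_eq_chainEval K (i - 1) η
    refine ⟨ψ, fun σ hσ hi => ?_⟩
    have h2 := congrArg (fun x => x (Finsupp.single (⟨σ, hσ, hi⟩ : Faces K i) 1)) hη
    exact (chainEval_single K i φ ⟨σ, hσ, hi⟩).symm.trans
      (h2.symm.trans (chainEval_bd K i ψ ⟨σ, hσ, hi⟩))
  · intro h η hη
    obtain ⟨φ, rfl⟩ := exists_eq_chainEval K i η
    obtain ⟨ψ, hψ⟩ := h φ (fun σ hσ hi => by
      rw [← chainEval_bd K (i + 1) φ ⟨σ, hσ, hi⟩]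
      exact congrArg (fun x => x (Finsupp.single (⟨σ, hσ, hi⟩ : Faces K (i + 1)) 1))
        (LinearMap.mem_ker.1 hη))
    refine ⟨chainEval k K (i - 1) ψ, ?_⟩
    refine Finsupp.lhom_ext' fun s => LinearMap.ext_ring ?_
    exact (chainEval_bd K i ψ s).trans ((hψ s.1 s.2.1 s.2.2).symm.trans
      (chainEval_single K i φ s).symm)

end Homology

end SComplex

/-! ### Koszul cohomology of Stanley–Reisner rings -/

/-- The exponent vector of the squarefree monomial supported on `s`. -/
noncomputable def faceExp {V : Type*} (s : Finset V) : V →₀ ℕ := ∑ v ∈ s, Finsupp.single v 1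

section FaceExp

variable {V : Type*} [DecidableEq V]

theorem faceExp_apply (s : Finset V) (v : V) : faceExp s v = if v ∈ s then 1 else 0 := by
  simp [faceExp, Finsupp.finsetSum_apply, Finsupp.single_apply]

theorem support_faceExp (s : Finset V) : (faceExp s).support = s := by
  ext v
  simp [faceExp_apply]

theorem faceExp_le_iff {s : Finset V} {m : V →₀ ℕ} : faceExp s ≤ m ↔ s ⊆ m.support := by
  constructor
  · intro h v hv
    have := h v
    rw [faceExp_apply, if_pos hv] at this
    rw [Finsupp.mem_support_iff]
    omega
  · intro h v
    rw [faceExp_apply]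
    split_ifs with hv
    · have := Finsupp.mem_support_iff.1 (h hv)
      omega
    · exact Nat.zero_le _

theorem faceExp_sub_single (s : Finset V) (v : V) :
    faceExp s - Finsupp.single v 1 = faceExp (s.erase v) := by
  ext w
  rw [Finsupp.tsub_apply, faceExp_apply, faceExp_apply, Finsupp.single_apply]
  by_cases h : v = w <;> by_cases h' : w ∈ s <;> simp [h, h', mem_erase, Ne.symm]

end FaceExp

theorem MvPolynomial.exists_coeff_eq {V k : Type*} [CommSemiring k] (u : (V →₀ ℕ) → k)
    (hu : {n | u n ≠ 0}.Finite) : ∃ p : MvPolynomial V k, ∀ n, p.coeff n = u n := by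
  classical
  refine ⟨∑ n ∈ hu.toFinset, MvPolynomial.monomial n (u n), fun n => ?_⟩
  rw [MvPolynomial.coeff_sum]
  simp only [MvPolynomial.coeff_monomial, sum_ite_eq', Set.Finite.mem_toFinset, Set.mem_ofPred_eq,
    ite_not]
  split_ifs with h <;> simp [h]

namespace SComplex

variable {V : Type} [DecidableEq V] {k : Type} [Field k]

omit [DecidableEq V] in
theorem prod_X_eq_monomial (s : Finset V) :
    ∏ v ∈ s, (MvPolynomial.X v : MvPolynomial V k) = MvPolynomial.monomial (faceExp s) 1 := by
  rw [faceExp, MvPolynomial.monomial_sum_one]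
  rfl

theorem mem_srIdeal {K : SComplex V} {p : MvPolynomial V k} :
    p ∈ srIdeal k K ↔ ∀ m ∈ p.support, m.support ∉ K.faces := by
  have h : srIdeal k K = Ideal.span ((fun m => MvPolynomial.monomial m (1 : k)) ''
      (faceExp '' {s : Finset V | s ∉ K.faces})) := by
    rw [srIdeal, Set.image_image]
    simp only [prod_X_eq_monomial]
  rw [h, MvPolynomial.mem_ideal_span_monomial_image]
  refine forall₂_congr fun m _ => ?_
  constructor
  · rintro ⟨_, ⟨s, hs, rfl⟩, hle⟩ hm
    exact hs (K.down_closed hm (faceExp_le_iff.1 hle))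
  · exact fun hm => ⟨_, ⟨_, hm, rfl⟩, faceExp_le_iff.2 subset_rfl⟩

theorem mem_srIdeal_iff_coeff {K : SComplex V} {p : MvPolynomial V k} :
    p ∈ srIdeal k K ↔ ∀ m : V →₀ ℕ, m.support ∈ K.faces → p.coeff m = 0 := by
  rw [mem_srIdeal]
  refine forall_congr' fun m => ?_
  rw [MvPolynomial.mem_support_iff]
  tauto

variable {ι : Type} [DecidableEq ι]

/-- The coloured linear forms: `colorVar c j` is the sum of all variables of colour `j`. -/
noncomputable def colorVar (k : Type) [Field k] [Fintype V] (c : V → ι) (j : ι) :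
    MvPolynomial V k :=
  ∑ v with c v = j, MvPolynomial.X v

/-- The Koszul differential for `colorVar` in terms of coefficients. -/
noncomputable def coeffD (o : ι → ℕ) (c : V → ι) (F : Finset ι → (V →₀ ℕ) → k) (T : Finset ι)
    (m : V →₀ ℕ) : k :=
  ∑ v ∈ m.support with c v ∈ T,
    koszulSign o T (c v) • F (T.erase (c v)) (m - Finsupp.single v 1)

theorem coeff_koszulD [Fintype V] (o : ι → ℕ) (c : V → ι) (f : Finset ι → MvPolynomial V k)
    (T : Finset ι) (m : V →₀ ℕ) :
    (koszulD o (colorVar k c) f T).coeff m = coeffD o c (fun T m => (f T).coeff m) T m := by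
  rw [koszulD, coeffD, MvPolynomial.coeff_sum,
    ← sum_fiberwise_of_maps_to (t := T) (g := c) (fun v hv => (mem_filter.1 hv).2)]
  refine sum_congr rfl fun j hj => ?_
  rw [← MvPolynomial.lcoeff_apply, map_zsmul, MvPolynomial.lcoeff_apply, smul_eq_mul, colorVar,
    sum_mul, MvPolynomial.coeff_sum, smul_sum, filter_filter, sum_filter, sum_filter,
    ← sum_subset (subset_univ m.support)]
  · refine sum_congr rfl fun v hv => ?_
    by_cases h : c v = j
    · rw [if_pos h, if_pos ⟨h ▸ hj, h⟩, MvPolynomial.coeff_X_mul', if_pos hv, h]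
    · rw [if_neg h, if_neg fun h' => h h'.2]
  · intro v _ hv
    rw [MvPolynomial.coeff_X_mul', if_neg hv, smul_zero, ite_self]

theorem koszulVanish_srRing_iff [Fintype V] {o : ι → ℕ} {c : V → ι} {K : SComplex V} {i : ℕ} :
    KoszulVanish o (colorVar k c) (SRRing k K) i ↔
      ∀ f : Finset ι → MvPolynomial V k, (∀ T, #T = i + 1 → ∀ m : V →₀ ℕ, m.support ∈ K.faces →
        coeffD o c (fun T m => (f T).coeff m) T m = 0) →
      ∃ g : Finset ι → MvPolynomial V k, ∀ T, #T = i → ∀ m : V →₀ ℕ, m.support ∈ K.faces →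
        (f T).coeff m = coeffD o c (fun T m => (g T).coeff m) T m := by
  let π := Algebra.linearMap (MvPolynomial V k) (SRRing k K)
  have hπ : Function.Surjective π := Ideal.Quotient.mk_surjective
  have hπ0 : ∀ p, π p = 0 ↔ ∀ m : V →₀ ℕ, m.support ∈ K.faces → p.coeff m = 0 := fun p =>
    Ideal.Quotient.eq_zero_iff_mem.trans mem_srIdeal_iff_coeff
  have hπe : ∀ p q, π p = π q ↔
      ∀ m : V →₀ ℕ, m.support ∈ K.faces → p.coeff m = q.coeff m := fun p q => by
    rw [← sub_eq_zero, ← map_sub, hπ0]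
    simp only [MvPolynomial.coeff_sub, sub_eq_zero]
  constructor
  · intro h f hf
    obtain ⟨g, hg⟩ := h (fun T => π (f T)) (fun T hT => by
      rw [koszulD_map, hπ0]
      intro m hm
      rw [coeff_koszulD, hf T hT m hm])
    choose g' hg' using fun T => hπ (g T)
    obtain rfl : (fun T => π (g' T)) = g := funext hg'
    refine ⟨g', fun T hT m hm => ?_⟩
    rw [← coeff_koszulD]
    refine (hπe _ _).1 ?_ m hm
    rw [← koszulD_map]
    exact hg T hT
  · intro h f hf
    choose f' hf' using fun T => hπ (f T)
    obtain rfl : (fun T => π (f' T)) = f := funext hf'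
    obtain ⟨g, hg⟩ := h f' (fun T hT m hm => by
      rw [← coeff_koszulD]
      refine (hπ0 _).1 ?_ m hm
      rw [← koszulD_map]
      exact hf T hT)
    refine ⟨fun T => π (g T), fun T hT => ?_⟩
    rw [koszulD_map, hπe]
    intro m hm
    rw [hg T hT m hm, coeff_koszulD]

end SComplex

namespace SComplex

variable {V : Type} [DecidableEq V] {k : Type} [Field k] {ι : Type} [DecidableEq ι]

theorem mem_restrict {K : SComplex V} {W σ : Finset V} :
    σ ∈ (K.restrict W).faces ↔ σ ∈ K.faces ∧ σ ⊆ W := by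
  simp [restrict]

theorem image_erase_of_injOn {c : V → ι} {σ : Finset V} (hc : Set.InjOn c σ) {v : V}
    (hv : v ∈ σ) : (σ.erase v).image c = (σ.image c).erase (c v) := by
  ext j
  simp only [mem_image, mem_erase]
  constructor
  · rintro ⟨w, ⟨hwv, hw⟩, rfl⟩
    exact ⟨fun h => hwv (hc hw hv h), w, hw, rfl⟩
  · rintro ⟨hj, w, hw, rfl⟩
    exact ⟨w, ⟨fun h => hj (h ▸ rfl), hw⟩, rfl⟩

/-- The squarefree part of the coefficient Koszul complex: the family of coefficients attached
to cochains `a S` of the restrictions of `K` to the colours outside `S`. -/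
noncomputable def squarefreeCoeff (K : SComplex V) (c : V → ι) (a : Finset ι → Finset V → k)
    (T : Finset ι) (m : V →₀ ℕ) : k :=
  if m.support ∈ K.faces ∧ m = faceExp m.support ∧ m.support.image c ⊆ T then
    a (T \ m.support.image c) m.support else 0

theorem coeffD_faceExp (o : ι → ℕ) {c : V → ι} {σ : Finset V} (hc : Set.InjOn c σ)
    {S : Finset ι} (hS : ∀ v ∈ σ, c v ∉ S) (F : Finset ι → (V →₀ ℕ) → k) :
    coeffD o c F (S ∪ σ.image c) (faceExp σ) =
      signedD (colorSign o c S) (fun τ => F (S ∪ τ.image c) (faceExp τ)) σ := by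
  rw [coeffD, signedD, support_faceExp,
    filter_true_of_mem fun v hv => mem_union_right _ (mem_image_of_mem c hv)]
  refine sum_congr rfl fun v hv => ?_
  rw [faceExp_sub_single, image_erase_of_injOn hc hv, erase_union_distrib,
    erase_eq_of_notMem (hS v hv)]
  rfl

theorem coeffD_squarefreeCoeff (o : ι → ℕ) {c : V → ι} {K : SComplex V}
    (hc : ∀ σ ∈ K.faces, Set.InjOn c σ) (a : Finset ι → Finset V → k) (T : Finset ι)
    {m : V →₀ ℕ} (hm : m.support ∈ K.faces) :
    coeffD o c (squarefreeCoeff K c a) T m =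
      if m = faceExp m.support ∧ m.support.image c ⊆ T then
        signedD (colorSign o c (T \ m.support.image c)) (a (T \ m.support.image c)) m.support
      else 0 := by
  split_ifs with h
  · obtain ⟨h1, h2⟩ := h
    set σ := m.support with hσ
    have hT : T = (T \ σ.image c) ∪ σ.image c := (sdiff_union_of_subset h2).symm
    have hS : ∀ v ∈ σ, c v ∉ T \ σ.image c := fun v hv h =>
      (mem_sdiff.1 h).2 (mem_image_of_mem c hv)
    have h3 := coeffD_faceExp (k := k) o (hc σ hm) hS (squarefreeCoeff K c a)
    rw [← hT, ← h1] at h3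
    rw [h3, signedD, signedD]
    refine sum_congr rfl fun v hv => ?_
    congr 1
    have hτ := erase_subset v σ
    rw [squarefreeCoeff, support_faceExp, if_pos ⟨K.down_closed hm hτ, rfl, subset_union_right⟩,
      union_sdiff_cancel_right]
    rw [Finset.disjoint_right]
    intro j hj
    obtain ⟨w, hw, rfl⟩ := mem_image.1 hj
    exact hS w (hτ hw)
  · refine sum_eq_zero fun v hv => ?_
    obtain ⟨hv, hvT⟩ := mem_filter.1 hv
    rw [squarefreeCoeff, if_neg, smul_zero]
    rintro ⟨-, h1, h2⟩
    have hmv : m v = 1 := by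
      by_contra hne
      have hv' : v ∈ (m - Finsupp.single v 1).support := by
        rw [Finsupp.mem_support_iff] at hv ⊢
        rw [Finsupp.tsub_apply, Finsupp.single_eq_same]
        omega
      exact notMem_erase _ _ (h2 (mem_image_of_mem c hv'))
    have h3 : (m - Finsupp.single v 1).support = m.support.erase v := by
      ext w
      rw [mem_erase, Finsupp.mem_support_iff, Finsupp.mem_support_iff, Finsupp.tsub_apply,
        Finsupp.single_apply]
      by_cases hw : v = w
      · subst hw; simp [hmv]
      · simp [hw, Ne.symm hw]
    rw [h3] at h1 h2
    apply h
    constructor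
    · rw [← faceExp_sub_single] at h1
      ext w
      have := DFunLike.congr_fun h1 w
      rw [Finsupp.tsub_apply, Finsupp.tsub_apply] at this
      by_cases hw : v = w
      · subst hw
        rw [faceExp_apply, if_pos hv, hmv]
      · simpa [Finsupp.single_apply, hw] using this
    · rw [image_erase_of_injOn (hc _ hm) hv] at h2
      intro j hj
      by_cases hjv : j = c v
      · exact hjv ▸ hvT
      · exact mem_of_mem_erase (h2 (mem_erase.2 ⟨hjv, hj⟩))

theorem exists_coeff_eq_squarefreeCoeff (K : SComplex V) (c : V → ι)
    (a : Finset ι → Finset V → k) :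
    ∃ f : Finset ι → MvPolynomial V k, ∀ T m, (f T).coeff m = squarefreeCoeff K c a T m := by
  have h : ∀ T, ∃ p : MvPolynomial V k, ∀ m, p.coeff m = squarefreeCoeff K c a T m := fun T => by
    refine MvPolynomial.exists_coeff_eq _ ((K.faces.image faceExp).finite_toSet.subset ?_)
    intro m hm
    rw [Set.mem_ofPred_eq, squarefreeCoeff] at hm
    have := (ne_eq _ _ ▸ hm : ¬ _ = _)
    rw [ite_eq_right_iff, Classical.not_imp] at this
    simp only [coe_image, Set.mem_image, mem_coe]
    exact ⟨_, this.1.1, this.1.2.1.symm⟩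
  choose f hf using h
  exact ⟨f, hf⟩

/-- The part of the coefficient Koszul complex that is not squarefree is contractible. -/
theorem exists_coeffD_eq_of_not_squarefree [Fintype V] {o : ι → ℕ} (ho : Function.Injective o)
    {c : V → ι} {K : SComplex V} (hc : ∀ σ ∈ K.faces, Set.InjOn c σ) {i : ℕ}
    (f : Finset ι → MvPolynomial V k) (hf : ∀ T, #T = i + 1 → ∀ m : V →₀ ℕ,
      m.support ∈ K.faces → coeffD o c (fun T m => (f T).coeff m) T m = 0) :
    ∃ g : Finset ι → MvPolynomial V k, ∀ T, #T = i → ∀ m : V →₀ ℕ, m.support ∈ K.faces →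
      coeffD o c (fun T m => (g T).coeff m) T m =
        if m = faceExp m.support ∧ m.support.image c ⊆ T then 0 else (f T).coeff m := by
  let bad : Finset ι → (V →₀ ℕ) → Finset V := fun T m =>
    {v ∈ m.support | 2 ≤ m v ∨ c v ∉ T}
  let u : Finset ι → (V →₀ ℕ) → k := fun T m =>
    if h : (bad T m).Nonempty then
      if c h.choose ∉ T then koszulSign o (insert (c h.choose) T) (c h.choose) •
        (f (insert (c h.choose) T)).coeff (m + Finsupp.single h.choose 1) else 0
    else 0
  have hu : ∀ T, ∃ p : MvPolynomial V k, ∀ m, p.coeff m = u T m := fun T => by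
    refine MvPolynomial.exists_coeff_eq _ ((univ.biUnion fun v : V =>
      (f (insert (c v) T)).support.image fun n => n - Finsupp.single v 1).finite_toSet.subset ?_)
    intro m hm
    rw [Set.mem_ofPred_eq] at hm
    by_cases h : (bad T m).Nonempty
    · by_cases h' : c h.choose ∉ T
      · simp only [u, dif_pos h, if_pos h'] at hm
        simp only [coe_biUnion, Set.mem_iUnion, mem_coe, mem_univ, true_and, exists_prop,
          mem_image, MvPolynomial.mem_support_iff]
        exact ⟨h.choose, _, fun h0 => hm (by rw [h0, smul_zero]), add_tsub_cancel_right _ _⟩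
      · simp only [u, dif_pos h, if_neg h'] at hm
        exact absurd rfl hm
    · simp only [u, dif_neg h] at hm
      exact absurd rfl hm
  choose g hg using hu
  refine ⟨g, fun T hT m hm => ?_⟩
  simp only [coeffD, hg]
  have hbad : ∀ w ∈ m.support, c w ∈ T → bad (T.erase (c w)) (m - Finsupp.single w 1) =
      bad T m := by
    intro w hw hwT
    ext x
    simp only [bad, mem_filter, Finsupp.mem_support_iff, Finsupp.tsub_apply, mem_erase]
    by_cases hx : w = x
    · subst hx
      rw [Finsupp.single_eq_same]
      simp only [hwT, ne_eq, not_true_eq_false, not_false_eq_true, or_true,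
        and_true, or_false]
      omega
    · rw [Finsupp.single_eq_of_ne' hx, Nat.sub_zero]
      by_cases hx0 : m x = 0
      · simp [hx0]
      · have : c x ≠ c w := fun h => hx (hc _ hm (Finsupp.mem_support_iff.2 hx0) hw h).symm
        simp [this]
  by_cases hB : (bad T m).Nonempty
  · have hng : ¬ (m = faceExp m.support ∧ m.support.image c ⊆ T) := by
      rintro ⟨h1, h2⟩
      obtain ⟨x, hx⟩ := hB
      obtain ⟨hx, h3 | h3⟩ := mem_filter.1 hx
      · rw [h1, faceExp_apply] at h3
        split_ifs at h3; omega
      · exact h3 (h2 (mem_image_of_mem c hx))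
    rw [if_neg hng]
    obtain ⟨v, hvB, hv⟩ : ∃ v ∈ bad T m, ∀ (T' : Finset ι) (m' : V →₀ ℕ), bad T' m' = bad T m →
        u T' m' = if c v ∉ T' then koszulSign o (insert (c v) T') (c v) •
          (f (insert (c v) T')).coeff (m' + Finsupp.single v 1) else 0 := by
      refine ⟨hB.choose, hB.choose_spec, fun T' m' h => ?_⟩
      have h' : (bad T' m').Nonempty := h ▸ hB
      have h'' : h'.choose = hB.choose := by
        have : ∀ (A B : Finset V) (hA : A.Nonempty) (hB : B.Nonempty), A = B →
            hA.choose = hB.choose := by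
          rintro A _ hA hB rfl
          rfl
        exact this _ _ h' hB h
      simp only [u, dif_pos h', h'']
    rw [sum_congr rfl fun w hw => by
      rw [hv _ _ (hbad w (mem_filter.1 hw).1 (mem_filter.1 hw).2)]]
    obtain ⟨hvm, hv2⟩ := mem_filter.1 hvB
    by_cases hvT : c v ∈ T
    · have hv2 : 2 ≤ m v := hv2.resolve_right (not_not.2 hvT)
      rw [sum_eq_single_of_mem v (mem_filter.2 ⟨hvm, hvT⟩)]
      · rw [if_pos (notMem_erase _ _), insert_erase hvT, smul_smul, koszulSign_mul_self, one_smul]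
        congr 1
        exact tsub_add_cancel_of_le (by
          rw [Finsupp.single_le_iff]; omega)
      · intro w hw hwv
        obtain ⟨hwm, hwT⟩ := mem_filter.1 hw
        rw [if_neg, smul_zero]
        exact not_not.2 (mem_erase.2 ⟨fun h => hwv (hc _ hm hwm hvm h.symm), hvT⟩)
    · have hsupp : (m + Finsupp.single v 1).support = m.support := by
        ext w
        rw [Finsupp.mem_support_iff] at hvm
        rw [Finsupp.mem_support_iff, Finsupp.mem_support_iff, Finsupp.add_apply,
          Finsupp.single_apply]
        by_cases hw : v = w
        · subst hw; simp [hvm]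
        · simp [hw]
      have h := hf (insert (c v) T) (by rw [card_insert_of_notMem hvT, hT])
        (m + Finsupp.single v 1) (by rwa [hsupp])
      rw [coeffD, hsupp] at h
      have hfil : m.support.filter (fun w => c w ∈ insert (c v) T) =
          insert v (m.support.filter fun w => c w ∈ T) := by
        ext w
        simp only [mem_filter, mem_insert]
        constructor
        · rintro ⟨h1, h2 | h2⟩
          · exact .inl (hc _ hm h1 hvm h2)
          · exact .inr ⟨h1, h2⟩
        · rintro (rfl | h1)
          · exact ⟨hvm, .inl rfl⟩
          · exact ⟨h1.1, .inr h1.2⟩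
      rw [hfil, sum_insert (by simp [hvT]), erase_insert hvT, add_tsub_cancel_right] at h
      have h2 := congrArg (fun x => koszulSign o (insert (c v) T) (c v) • x) h
      simp only [smul_add, smul_zero, smul_smul, koszulSign_mul_self, one_smul] at h2
      rw [eq_neg_of_add_eq_zero_left h2, smul_sum, ← sum_neg_distrib]
      refine sum_congr rfl fun w hw => ?_
      obtain ⟨hwm, hwT⟩ := mem_filter.1 hw
      have hwv : c w ≠ c v := fun h => hvT (h ▸ hwT)
      rw [if_pos (fun h => hvT (mem_of_mem_erase h)), ← erase_insert_of_ne hwv.symm, smul_smul,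
        smul_smul, ← neg_smul, koszulSign_mul_koszulSign_insert ho hvT hwT]
      congr 2
      rw [tsub_add_eq_add_tsub]
      rw [Finsupp.single_le_iff]
      exact Nat.one_le_iff_ne_zero.2 (Finsupp.mem_support_iff.1 hwm)
  · have hgood : m = faceExp m.support ∧ m.support.image c ⊆ T := by
      rw [not_nonempty_iff_eq_empty, filter_eq_empty_iff] at hB
      constructor
      · ext w
        rw [faceExp_apply]
        split_ifs with hw
        · have h1 := hB hw
          have h2 := Finsupp.mem_support_iff.1 hw
          push Not at h1
          omega
        · exact Finsupp.notMem_support_iff.1 hw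
      · intro j hj
        obtain ⟨w, hw, rfl⟩ := mem_image.1 hj
        have h1 := hB hw
        push Not at h1
        exact h1.2
    rw [if_pos hgood]
    refine sum_eq_zero fun w hw => ?_
    have : ¬ (bad (T.erase (c w)) (m - Finsupp.single w 1)).Nonempty := by
      rwa [hbad w (mem_filter.1 hw).1 (mem_filter.1 hw).2]
    simp only [u, dif_neg this, smul_zero]

/-- A coloured form of Hochster's formula for the Koszul cohomology of a Stanley–Reisner ring. -/
theorem koszulVanish_iff_cochainVanish [Fintype V] {o : ι → ℕ} (ho : Function.Injective o)
    {c : V → ι} {K : SComplex V} (hc : ∀ σ ∈ K.faces, Set.InjOn c σ) {i : ℕ} :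
    KoszulVanish o (colorVar k c) (SRRing k K) i ↔ ∀ (S : Finset ι) (j : ℕ), j + #S = i →
      CochainVanish k (colorSign o c S) (K.restrict (univ.filter fun v => c v ∉ S)) j := by
  have hcard : ∀ (S : Finset ι) (σ : Finset V), σ ∈ K.faces → (∀ v ∈ σ, c v ∉ S) →
      #(S ∪ σ.image c) = #σ + #S := fun S σ hσ hS => by
    rw [card_union_of_disjoint, card_image_of_injOn (hc σ hσ), add_comm]
    rw [Finset.disjoint_right]
    intro j hj
    obtain ⟨w, hw, rfl⟩ := mem_image.1 hj
    exact hS w hw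
  have hsd : ∀ (S : Finset ι) (σ : Finset V), (∀ v ∈ σ, c v ∉ S) →
      (S ∪ σ.image c) \ σ.image c = S := fun S σ hS => by
    rw [union_sdiff_cancel_right]
    rw [Finset.disjoint_right]
    intro j hj
    obtain ⟨w, hw, rfl⟩ := mem_image.1 hj
    exact hS w hw
  have hres : ∀ (S : Finset ι) (σ : Finset V),
      σ ∈ (K.restrict (univ.filter fun v => c v ∉ S)).faces ↔
        σ ∈ K.faces ∧ ∀ v ∈ σ, c v ∉ S := fun S σ => by
    rw [mem_restrict, subset_iff]
    simp
  rw [koszulVanish_srRing_iff]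
  constructor
  · intro h S j hj φ hφ
    obtain ⟨f, hf⟩ := exists_coeff_eq_squarefreeCoeff K c
      (fun S' => if S' = S then φ else fun _ => 0)
    have hf' : (fun T m => (f T).coeff m) = squarefreeCoeff K c
      (fun S' => if S' = S then φ else fun _ => 0) := funext₂ hf
    obtain ⟨g, hg⟩ := h f (fun T hT m hm => by
      rw [hf', coeffD_squarefreeCoeff o hc _ _ hm]
      split_ifs with h1 h2
      · rw [h2]
        refine hφ _ ((hres _ _).2 ⟨hm, fun v hv hvS => ?_⟩) ?_
        · rw [← h2] at hvS
          exact (mem_sdiff.1 hvS).2 (mem_image_of_mem c hv)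
        · have h3 := card_sdiff_add_card_eq_card h1.2
          rw [h2, card_image_of_injOn (hc _ hm)] at h3
          omega
      · simp [signedD]
      · rfl)
    refine ⟨fun τ => (g (S ∪ τ.image c)).coeff (faceExp τ), fun σ hσ hσj => ?_⟩
    obtain ⟨hσK, hσS⟩ := (hres _ _).1 hσ
    have h1 := hg (S ∪ σ.image c) (by rw [hcard S σ hσK hσS, hσj, hj]) (faceExp σ)
      (by rwa [support_faceExp])
    rw [coeffD_faceExp o (hc σ hσK) hσS, hf, squarefreeCoeff, support_faceExp,
      if_pos ⟨hσK, rfl, subset_union_right⟩, hsd S σ hσS, if_pos rfl] at h1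
    exact h1
  · intro h f hf
    have h1 : ∀ S : Finset ι, ∃ ψ : Finset V → k, ∀ σ ∈ K.faces, (∀ v ∈ σ, c v ∉ S) →
        #σ + #S = i → (f (S ∪ σ.image c)).coeff (faceExp σ) =
          signedD (colorSign o c S) ψ σ := by
      intro S
      by_cases hS : #S ≤ i
      · obtain ⟨ψ, hψ⟩ := h S (i - #S) (by omega)
          (fun τ => (f (S ∪ τ.image c)).coeff (faceExp τ)) (fun σ hσ hσi => by
            obtain ⟨hσK, hσS⟩ := (hres _ _).1 hσ
            rw [← coeffD_faceExp o (hc σ hσK) hσS (fun T m => (f T).coeff m)]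
            exact hf _ (by rw [hcard S σ hσK hσS]; omega) _ (by rwa [support_faceExp]))
        exact ⟨ψ, fun σ hσ hσS hi => hψ σ ((hres _ _).2 ⟨hσ, hσS⟩) (by omega)⟩
      · exact ⟨0, fun σ _ _ hi => absurd hi (by omega)⟩
    choose ψ hψ using h1
    obtain ⟨g, hg⟩ := exists_coeff_eq_squarefreeCoeff K c ψ
    have hg' : (fun T m => (g T).coeff m) = squarefreeCoeff K c ψ := funext₂ hg
    obtain ⟨g', hg''⟩ := exists_coeffD_eq_of_not_squarefree ho hc f hf
    refine ⟨fun T => g T + g' T, fun T hT m hm => ?_⟩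
    have hadd : coeffD o c (fun T m => (g T + g' T).coeff m) T m =
        coeffD o c (fun T m => (g T).coeff m) T m + coeffD o c (fun T m => (g' T).coeff m) T m := by
      simp only [coeffD, MvPolynomial.coeff_add, smul_add, sum_add_distrib]
    rw [hadd, hg'' T hT m hm, hg', coeffD_squarefreeCoeff o hc _ _ hm]
    split_ifs with hgood
    · rw [add_zero, ← hψ _ _ hm (fun v hv hvS => (mem_sdiff.1 hvS).2 (mem_image_of_mem c hv)),
        sdiff_union_of_subset hgood.2, ← hgood.1]
      rw [← hT, ← card_sdiff_add_card_eq_card hgood.2, card_image_of_injOn (hc _ hm), add_comm]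
    · rw [zero_add]

end SComplex

/-! ### Depth of Stanley–Reisner rings -/

theorem Nat.sSup_forall_lt_notMem {A : Set ℕ} (hA : A.Nonempty) :
    sSup {n | ∀ i < n, i ∉ A} = sInf A := by
  refine IsGreatest.csSup_eq ⟨fun i hi h => ?_, fun n hn => ?_⟩
  · exact absurd (Nat.sInf_le h) (not_le.2 hi)
  · by_contra! h
    exact hn _ h (Nat.sInf_mem hA)

theorem Ideal.top_ne_ofList_smul_top {R : Type*} [CommRing R] {I : Ideal R} (hI : I ≠ ⊤)
    {rs : List R} (hrs : ∀ r ∈ rs, r ∈ I) :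
    (⊤ : Submodule R R) ≠ Ideal.ofList rs • ⊤ := by
  intro h
  rw [smul_eq_mul, Ideal.mul_top] at h
  exact hI (top_le_iff.1 (h.le.trans (Ideal.span_le.2 hrs)))

namespace SComplex

variable {V : Type} [DecidableEq V] {k : Type} [Field k] {ι : Type} [DecidableEq ι]

theorem span_X_ne_top {K : SComplex V} (hK : ∅ ∈ K.faces) :
    Ideal.span (Set.range fun v : V => Ideal.Quotient.mk (srIdeal k K) (MvPolynomial.X v)) ≠ ⊤ := by
  intro h
  have hφ : ∀ p ∈ srIdeal k K, MvPolynomial.constantCoeff p = 0 := fun p hp =>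
    mem_srIdeal_iff_coeff.1 hp 0 (by simpa using hK)
  have h1 : Ideal.span
      (Set.range fun v : V => Ideal.Quotient.mk (srIdeal k K) (MvPolynomial.X v)) ≤
      RingHom.ker (Ideal.Quotient.lift (srIdeal k K) MvPolynomial.constantCoeff hφ) := by
    refine Ideal.span_le.2 ?_
    rintro _ ⟨v, rfl⟩
    exact (Ideal.Quotient.lift_mk _ _ _).trans (MvPolynomial.constantCoeff_X (R := k) v)
  rw [h, top_le_iff] at h1
  exact RingHom.ker_ne_top _ h1

omit [DecidableEq ι] in
theorem X_mul_X_mem_srIdeal {c : V → ι} {K : SComplex V} (hc : ∀ σ ∈ K.faces, Set.InjOn c σ)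
    {v w : V} (hvw : v ≠ w) (h : c v = c w) :
    MvPolynomial.X v * MvPolynomial.X w ∈ srIdeal k K := by
  refine Ideal.subset_span ⟨{v, w}, fun hf => hvw ?_, prod_pair hvw⟩
  exact hc _ hf (by simp) (by simp) h

theorem koszulVanish_mk_iff {o : ι → ℕ} {θ : ι → MvPolynomial V k} {K : SComplex V} {i : ℕ} :
    KoszulVanish o (fun j => Ideal.Quotient.mk (srIdeal k K) (θ j)) (SRRing k K) i ↔
      KoszulVanish o θ (SRRing k K) i :=
  Iff.rfl

variable [Fintype V]

theorem exists_isRegular_iff {o : ι → ℕ} (ho : Function.Injective o) {c : V → ι}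
    {K : SComplex V} (hc : ∀ σ ∈ K.faces, Set.InjOn c σ) (hK : ∅ ∈ K.faces) {n : ℕ} :
    (∃ rs : List (SRRing k K), rs.length = n ∧
      (∀ r ∈ rs, r ∈ Ideal.span
        (Set.range fun v : V => Ideal.Quotient.mk (srIdeal k K) (MvPolynomial.X v))) ∧
      RingTheory.Sequence.IsRegular (SRRing k K) rs) ↔
    ∀ i < n, KoszulVanish o (colorVar k c) (SRRing k K) i := by
  constructor
  · rintro ⟨rs, rfl, hmem, hreg⟩ i hi
    rw [← koszulVanish_mk_iff]
    refine koszulVanish_of_isWeaklyRegular ho rs _ (fun r hr => ?_) hreg.1 i hi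
    refine (Ideal.span_le.2 ?_ : _ ≤ Ideal.radical _) (hmem r hr)
    rintro _ ⟨v, rfl⟩
    refine ⟨2, ?_⟩
    have h : Ideal.Quotient.mk (srIdeal k K) (MvPolynomial.X v) ^ 2 =
        Ideal.Quotient.mk (srIdeal k K) (MvPolynomial.X v) *
          Ideal.Quotient.mk (srIdeal k K) (colorVar k c (c v)) := by
      rw [pow_two, ← map_mul, ← map_mul, eq_comm, Ideal.Quotient.mk_eq_mk_iff_sub_mem, colorVar,
        ← mul_sub, ← add_sum_erase (univ.filter fun w => c w = c v) _
          (mem_filter.2 ⟨mem_univ v, rfl⟩), add_sub_cancel_left,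
        mul_sum]
      refine sum_mem fun w hw => ?_
      obtain ⟨hwv, hw⟩ := mem_erase.1 hw
      exact X_mul_X_mem_srIdeal hc (Ne.symm hwv) (mem_filter.1 hw).2.symm
    dsimp only
    rw [h]
    exact Ideal.mul_mem_left _ _ (Ideal.subset_span ⟨c v, rfl⟩)
  · intro h
    obtain ⟨rs, hlen, hmem, hreg⟩ := exists_isWeaklyRegular_of_koszulVanish ho
      (θ := fun j => Ideal.Quotient.mk (srIdeal k K) (colorVar k c j)) n (SRRing k K)
      (fun i hi => koszulVanish_mk_iff.2 (h i hi))
    have hmem' : ∀ r ∈ rs, r ∈ Ideal.span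
        (Set.range fun v : V => Ideal.Quotient.mk (srIdeal k K) (MvPolynomial.X v)) := by
      intro r hr
      refine Ideal.span_le.2 ?_ (hmem r hr)
      rintro _ ⟨j, rfl⟩
      dsimp only
      rw [colorVar, map_sum]
      exact sum_mem fun v _ => Ideal.subset_span ⟨v, rfl⟩
    exact ⟨rs, hlen, hmem', hreg,
      Ideal.top_ne_ofList_smul_top (span_X_ne_top hK) hmem'⟩

/-- The coloured Koszul cohomology in terms of reduced homology. -/
theorem koszulVanish_iff_hVanish {o : ι → ℕ} (ho : Function.Injective o)
    {c : V → ι} {K : SComplex V} (hc : ∀ σ ∈ K.faces, Set.InjOn c σ) {i : ℕ} :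
    KoszulVanish o (colorVar k c) (SRRing k K) i ↔ ∀ (S : Finset ι) (j : ℕ), j + #S = i →
      HVanish k (K.restrict (univ.filter fun v => c v ∉ S)) j := by
  rw [koszulVanish_iff_cochainVanish ho hc]
  refine forall₃_congr fun S j _ => ?_
  have hc' : ∀ σ ∈ (K.restrict (univ.filter fun v => c v ∉ S)).faces, Set.InjOn c σ :=
    fun σ hσ => hc σ (mem_restrict.1 hσ).1
  rw [hVanish_iff_cochainVanish, cochainVanish_colorSign_iff hc']
  · exact cochainVanish_koszulSign_iff (fun σ hσ => ho.comp_injOn (hc' σ hσ))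
      fun σ _ => arbIndex_injective.injOn
  · intro σ hσ v hv
    exact (mem_filter.1 ((mem_restrict.1 hσ).2 hv)).2

theorem not_hVanish_zero_of_faces_eq {K : SComplex V} (hK : K.faces = {∅}) :
    ¬ HVanish k K 0 := by
  rw [hVanish_iff_cochainVanish]
  intro h
  obtain ⟨ψ, hψ⟩ := h (fun _ => 1) (fun σ hσ h1 => by
    rw [hK, mem_singleton] at hσ
    simp [hσ] at h1)
  simpa [signedD] using hψ ∅ (by simp [hK]) rfl

theorem srDepth_eq_sInf_koszulVanish {o : ι → ℕ} (ho : Function.Injective o) {c : V → ι}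
    {K : SComplex V} (hc : ∀ σ ∈ K.faces, Set.InjOn c σ) (hK : ∅ ∈ K.faces) :
    srDepth k K = sInf {i | ¬ KoszulVanish o (colorVar k c) (SRRing k K) i} := by
  rw [← Nat.sSup_forall_lt_notMem, srDepth, depthIn]
  · congr 1
    ext n
    simp only [Set.mem_ofPred_eq, not_not]
    exact exists_isRegular_iff ho hc hK
  · refine ⟨0 + #(univ.image c), fun h => ?_⟩
    rw [koszulVanish_iff_hVanish ho hc] at h
    refine not_hVanish_zero_of_faces_eq ?_ (h _ 0 rfl)
    ext σ
    rw [mem_restrict, mem_singleton]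
    constructor
    · rintro ⟨-, hσ⟩
      simpa using hσ
    · rintro rfl
      exact ⟨hK, empty_subset _⟩

/-- The depth of a Stanley–Reisner ring in terms of a proper colouring of the vertices. -/
theorem srDepth_eq_sInf_hVanish {o : ι → ℕ} (ho : Function.Injective o) {c : V → ι}
    {K : SComplex V} (hc : ∀ σ ∈ K.faces, Set.InjOn c σ) (hK : ∅ ∈ K.faces) :
    srDepth k K = sInf {n : ℕ | ∃ (i : ℕ) (S : Finset ι), n = i + #S ∧
      ¬ HVanish k (K.restrict (univ.filter fun v => c v ∉ S)) i} := by
  rw [srDepth_eq_sInf_koszulVanish ho hc hK]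
  congr 1
  ext n
  simp only [Set.mem_ofPred_eq]
  rw [koszulVanish_iff_hVanish ho hc]
  push Not
  rw [exists_comm]
  simp only [eq_comm]

end SComplex

/-! ### Heights in finite posets -/

section Height

variable {P : Type} [DecidableEq P] [Fintype P] [PartialOrder P] [∀ a b : P, Decidable (a ≤ b)]

theorem pheight_lt_pheight {p q : P} (h : p < q) : pheight p < pheight q := by
  obtain ⟨C, hC, hCp⟩ := exists_mem_eq_sup (univ.filter fun C : Finset P =>
    p ∈ C ∧ (∀ a ∈ C, a ≤ p) ∧ ∀ a ∈ C, ∀ b ∈ C, a ≤ b ∨ b ≤ a)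
    ⟨{p}, by simp⟩ Finset.card
  simp only [mem_filter, mem_univ, true_and] at hC
  have hq : q ∉ C := fun hq => absurd (hC.2.1 q hq) h.not_ge
  have hle : ∀ a ∈ C, a ≤ q := fun a ha => (hC.2.1 a ha).trans h.le
  rw [pheight, hCp, pheight, ← Nat.succ_le_iff, Nat.succ_eq_add_one,
    ← card_insert_of_notMem hq]
  refine le_sup (f := Finset.card) ?_
  simp only [mem_filter, mem_univ, true_and, mem_insert, true_or, forall_eq_or_imp, le_refl]
  exact ⟨hle, fun a ha => .inr (hle a ha), fun a ha => ⟨.inl (hle a ha), hC.2.2 a ha⟩⟩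

theorem pheight_mem_Icc (p : P) : pheight p ∈ Icc 1 (pheightMax P) := by
  rw [mem_Icc]
  constructor
  · rw [← card_singleton p]
    exact le_sup (f := Finset.card) (by simp)
  · exact le_sup (f := pheight) (mem_univ p)

theorem injOn_pheight {C : Finset P} (hC : C ∈ (orderComplex P).faces) :
    Set.InjOn (pheight (P := P)) C := by
  simp only [orderComplex, mem_filter, mem_univ, true_and] at hC
  intro a ha b hb h
  by_contra hne
  rcases hC a ha b hb with h' | h'
  · exact (pheight_lt_pheight (lt_of_le_of_ne h' hne)).ne h
  · exact (pheight_lt_pheight (lt_of_le_of_ne h' (Ne.symm hne))).ne h.symm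

theorem empty_mem_orderComplex : ∅ ∈ (orderComplex P).faces := by
  simp [orderComplex]

theorem srDepth_orderComplex (k : Type) [Field k] :
    SComplex.srDepth k (orderComplex P) = sInf {n : ℕ | ∃ (i : ℕ) (S : Finset ℕ),
        S ⊆ Finset.Icc 1 (pheightMax P) ∧ n = i + S.card ∧
        ¬ SComplex.HVanish k
          ((orderComplex P).restrict (Finset.univ.filter fun p => pheight p ∉ S)) i} := by
  rw [SComplex.srDepth_eq_sInf_hVanish (o := id) Function.injective_id
    (fun C hC => injOn_pheight hC) empty_mem_orderComplex]
  apply le_antisymm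
  · refine le_csInf ?_ ?_
    · refine ⟨0 + _, 0, _, subset_rfl, rfl, SComplex.not_hVanish_zero_of_faces_eq ?_⟩
      ext σ
      rw [SComplex.mem_restrict, mem_singleton]
      simp only [pheight_mem_Icc, not_true_eq_false, filter_false, subset_empty]
      exact ⟨And.right, fun h => ⟨h ▸ empty_mem_orderComplex, h⟩⟩
    · rintro _ ⟨i, S, -, rfl, h⟩
      exact Nat.sInf_le ⟨i, S, rfl, h⟩
  · refine le_csInf ?_ ?_
    · refine ⟨0 + _, 0, Icc 1 (pheightMax P), rfl, SComplex.not_hVanish_zero_of_faces_eq ?_⟩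
      ext σ
      rw [SComplex.mem_restrict, mem_singleton]
      simp only [pheight_mem_Icc, not_true_eq_false, filter_false, subset_empty]
      exact ⟨And.right, fun h => ⟨h ▸ empty_mem_orderComplex, h⟩⟩
    · rintro n ⟨i, S, hn, h⟩
      subst hn
      refine le_trans (Nat.sInf_le ?_) (Nat.add_le_add_left
        (card_le_card (inter_subset_left (s₂ := Icc 1 (pheightMax P)))) i)
      refine ⟨i, _, inter_subset_right, rfl, ?_⟩
      simpa only [mem_inter, pheight_mem_Icc, and_true] using h

end Height

/-! ### Stellar subdivisions -/

namespace SComplex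

variable {U : Type} [DecidableEq U] {k : Type} [Field k]

theorem ext_faces {A B : SComplex U} (h : ∀ C, C ∈ A.faces ↔ C ∈ B.faces) : A = B := by
  cases A
  cases B
  congr
  ext C
  exact h C

theorem support_add_faceExp (m : U →₀ ℕ) (F : Finset U) :
    (m + faceExp F).support = m.support ∪ F := by
  ext v
  by_cases h : v ∈ F <;> simp [faceExp_apply, h]

/-- Multiplication by a squarefree monomial `x ^ F` identifies the Stanley–Reisner ring of the
star of `F` with the kernel of the quotient map onto the Stanley–Reisner ring of the complex of
faces not containing `F`. -/
theorem exists_exact_of_star {A B C : SComplex U} {F : Finset U}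
    (hA : ∀ G, G ∈ A.faces ↔ G ∪ F ∈ B.faces) (hC : ∀ G, G ∈ C.faces ↔ G ∈ B.faces ∧ ¬ F ⊆ G) :
    ∃ (a : SRRing k A →ₗ[MvPolynomial U k] SRRing k B)
      (b : SRRing k B →ₗ[MvPolynomial U k] SRRing k C),
      Function.Injective a ∧ Function.Surjective b ∧ Function.Exact a b ∧
      ∀ p, a (Ideal.Quotient.mk _ p) =
        Ideal.Quotient.mk _ (MvPolynomial.monomial (faceExp F) 1 * p) := by
  have hmul : ∀ p : MvPolynomial U k,
      MvPolynomial.monomial (faceExp F) 1 * p ∈ srIdeal k B ↔ p ∈ srIdeal k A := by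
    intro p
    rw [mem_srIdeal_iff_coeff, mem_srIdeal_iff_coeff]
    constructor
    · intro h m hm
      have := h (m + faceExp F) (by rw [support_add_faceExp]; exact (hA _).1 hm)
      rwa [add_comm, MvPolynomial.coeff_monomial_mul, one_mul] at this
    · intro h m hm
      rw [MvPolynomial.coeff_monomial_mul', one_mul]
      split_ifs with hF
      · refine h _ ((hA _).2 ?_)
        rwa [← support_add_faceExp, tsub_add_cancel_of_le hF]
      · rfl
  have hle : srIdeal k B ≤ srIdeal k C := by
    intro p
    rw [mem_srIdeal_iff_coeff, mem_srIdeal_iff_coeff]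
    exact fun h m hm => h m ((hC _).1 hm).1
  let a : SRRing k A →ₗ[MvPolynomial U k] SRRing k B :=
    Submodule.mapQ (srIdeal k A) (srIdeal k B)
      (LinearMap.mulLeft _ (MvPolynomial.monomial (faceExp F) 1)) fun p hp => (hmul p).2 hp
  let b : SRRing k B →ₗ[MvPolynomial U k] SRRing k C :=
    Submodule.mapQ (srIdeal k B) (srIdeal k C) LinearMap.id hle
  have ha : ∀ p, a (Ideal.Quotient.mk _ p) =
      Ideal.Quotient.mk _ (MvPolynomial.monomial (faceExp F) 1 * p) := fun p => rfl
  have hb : ∀ p, b (Ideal.Quotient.mk _ p) = Ideal.Quotient.mk _ p := fun p => rfl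
  refine ⟨a, b, ?_, ?_, ?_, ha⟩
  · rw [injective_iff_map_eq_zero]
    intro x hx
    obtain ⟨p, rfl⟩ := Ideal.Quotient.mk_surjective x
    rw [ha, Ideal.Quotient.eq_zero_iff_mem, hmul] at hx
    exact Ideal.Quotient.eq_zero_iff_mem.2 hx
  · intro x
    obtain ⟨p, rfl⟩ := Ideal.Quotient.mk_surjective x
    exact ⟨Ideal.Quotient.mk _ p, hb p⟩
  · intro x
    obtain ⟨p, rfl⟩ := Ideal.Quotient.mk_surjective x
    rw [hb, Ideal.Quotient.eq_zero_iff_mem, mem_srIdeal_iff_coeff]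
    constructor
    · intro h
      refine ⟨Ideal.Quotient.mk _ (p.divMonomial (faceExp F)), ?_⟩
      rw [ha, Ideal.Quotient.mk_eq_mk_iff_sub_mem, mem_srIdeal_iff_coeff]
      intro m hm
      rw [MvPolynomial.coeff_sub, MvPolynomial.coeff_monomial_mul', one_mul]
      split_ifs with hF
      · rw [MvPolynomial.coeff_divMonomial, add_tsub_cancel_of_le hF, sub_self]
      · rw [h m ((hC _).2 ⟨hm, fun h' => hF (faceExp_le_iff.2 h')⟩), sub_zero]
    · rintro ⟨y, hy⟩ m hm
      obtain ⟨q, rfl⟩ := Ideal.Quotient.mk_surjective y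
      rw [ha, Ideal.Quotient.mk_eq_mk_iff_sub_mem, mem_srIdeal_iff_coeff] at hy
      have := hy m ((hC _).1 hm).1
      rw [MvPolynomial.coeff_sub, MvPolynomial.coeff_monomial_mul',
        if_neg fun h' => ((hC _).1 hm).2 (faceExp_le_iff.1 h'), zero_sub, neg_eq_zero] at this
      exact this

variable [Fintype U]

theorem colorVar_id (v : U) : colorVar k id v = MvPolynomial.X v := by
  simp [colorVar, filter_eq']

variable (k) in
/-- The Koszul cohomology of `k[K]` vanishes below degree `d`; for nonvoid `K` this says that
the depth of `k[K]` is at least `d`. -/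
def DepthGE (K : SComplex U) (d : ℕ) : Prop :=
  ∀ i < d, KoszulVanish (arbIndex U) (colorVar k id) (SRRing k K) i

theorem srDepth_eq_sSup_depthGE {K : SComplex U} (hK : ∅ ∈ K.faces) :
    srDepth k K = sSup {d | DepthGE k K d} := by
  rw [srDepth, depthIn]
  congr 1
  ext n
  exact exists_isRegular_iff arbIndex_injective (fun σ _ => Set.injOn_id _) hK

theorem koszulVanish_id_iff_hVanish {K : SComplex U} {i : ℕ} :
    KoszulVanish (arbIndex U) (colorVar k id) (SRRing k K) i ↔
      ∀ (S : Finset U) (j : ℕ), j + #S = i → HVanish k (K.restrict Sᶜ) j := by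
  rw [koszulVanish_iff_hVanish arbIndex_injective (fun σ _ => Set.injOn_id _)]
  refine forall₃_congr fun S j _ => ?_
  have : (univ.filter fun v : U => id v ∉ S) = Sᶜ := by ext; simp
  rw [this]

section Exact

variable {A B C : SComplex U} {F : Finset U} {d : ℕ}
  (hA : ∀ G, G ∈ A.faces ↔ G ∪ F ∈ B.faces) (hC : ∀ G, G ∈ C.faces ↔ G ∈ B.faces ∧ ¬ F ⊆ G)

include hA hC

theorem DepthGE.middle (h₁ : DepthGE k A d) (h₂ : DepthGE k C d) : DepthGE k B d := by
  obtain ⟨a, b, ha, hb, hab, -⟩ := exists_exact_of_star (k := k) hA hC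
  exact fun i hi => koszulVanish_middle arbIndex_injective hb hab (h₁ i hi) (h₂ i hi) ha

theorem DepthGE.right (h₁ : DepthGE k B d) (h₂ : DepthGE k A (d + 1)) : DepthGE k C d := by
  obtain ⟨a, b, ha, hb, hab, -⟩ := exists_exact_of_star (k := k) hA hC
  exact fun i hi => koszulVanish_right arbIndex_injective ha hb hab (h₁ i hi)
    (h₂ (i + 1) (by omega))

theorem DepthGE.left (h₁ : DepthGE k B d) (h₂ : ∀ e, e + 1 = d → DepthGE k C e) :
    DepthGE k A d := by
  obtain ⟨a, b, ha, hb, hab, -⟩ := exists_exact_of_star (k := k) hA hC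
  refine fun i hi => koszulVanish_left arbIndex_injective ha hb hab (h₁ i hi) fun j hj => ?_
  exact h₂ (d - 1) (by omega) j (by omega)

end Exact

omit [Fintype U] in
theorem mem_antistar_singleton {K : SComplex U} {v : U} {G : Finset U} :
    G ∈ (K.antistar {v}).faces ↔ G ∈ K.faces ∧ ¬ {v} ⊆ G := by
  rw [antistar, mem_filter, disjoint_singleton_left, singleton_subset_iff]

theorem DepthGE.antistar {K : SComplex U} {d : ℕ} (h : DepthGE k K (d + 1)) (v : U) :
    DepthGE k (K.antistar {v}) d := by
  intro i hi
  rw [koszulVanish_id_iff_hVanish]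
  intro S j hj
  have h1 : (K.antistar {v}).restrict Sᶜ = K.restrict (insert v S)ᶜ := by
    refine ext_faces fun G => ?_
    rw [mem_restrict, mem_restrict, mem_antistar_singleton, singleton_subset_iff, and_assoc,
      subset_compl_iff_disjoint_right, subset_compl_iff_disjoint_right, disjoint_insert_right]
  rw [h1]
  by_cases hv : v ∈ S
  · rw [insert_eq_of_mem hv]
    exact koszulVanish_id_iff_hVanish.1 (h i (by omega)) S j hj
  · refine koszulVanish_id_iff_hVanish.1 (h (i + 1) (by omega)) _ j ?_
    rw [card_insert_of_notMem hv]
    omega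

/-- The star of `F`: the faces whose union with `F` is again a face. -/
def star (K : SComplex U) (F : Finset U) : SComplex U where
  faces := K.faces.filter fun G => G ∪ F ∈ K.faces
  down_closed := by
    intro s t hs hts
    rw [mem_filter] at hs ⊢
    exact ⟨K.down_closed hs.1 hts, K.down_closed hs.2 (union_subset_union_left hts)⟩

omit [Fintype U] in
theorem mem_star {K : SComplex U} {F G : Finset U} : G ∈ (K.star F).faces ↔ G ∪ F ∈ K.faces := by
  rw [star, mem_filter]
  exact and_iff_right_of_imp fun h => K.down_closed h subset_union_left

theorem DepthGE.star {K : SComplex U} {d : ℕ} (h : DepthGE k K d) (F : Finset U) :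
    DepthGE k (K.star F) d := by
  induction F using Finset.induction_on with
  | empty =>
    have : K.star ∅ = K := ext_faces fun G => by rw [mem_star, union_empty]
    rwa [this]
  | insert v F _ ih =>
    refine DepthGE.left (B := K.star F) (C := (K.star F).antistar {v}) (F := {v}) (fun G => ?_)
      (fun G => mem_antistar_singleton) ih ?_
    · rw [mem_star, mem_star, insert_eq, union_assoc]
    · rintro e rfl
      exact ih.antistar v

/-- The depth of a cone is one more than the depth of its base. -/
theorem DepthGE.cone {K : SComplex U} {d : ℕ} {v : U} (hv : ∀ G ∈ K.faces, G ∪ {v} ∈ K.faces)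
    (h : DepthGE k (K.antistar {v}) d) : DepthGE k K (d + 1) := by
  obtain ⟨a, b, ha, hb, hab, hmul⟩ := exists_exact_of_star (k := k) (A := K) (B := K)
    (F := {v}) (fun G => ⟨hv G, fun h => K.down_closed h subset_union_left⟩)
    (fun G => mem_antistar_singleton (v := v))
  intro i hi f hf
  obtain ⟨g, hg⟩ := exists_smul_eq_koszulD arbIndex_injective _ hf v
  refine exists_eq_koszulD_of_map_eq arbIndex_injective ha hb hab
    (fun j hj => h j (by omega)) (g := g) fun T hT => ?_
  rw [← hg T hT, colorVar_id]
  obtain ⟨p, hp⟩ := Ideal.Quotient.mk_surjective (f T)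
  rw [← hp, hmul]
  simp only [faceExp, sum_singleton]
  rfl

/-- Stellar subdivisions do not change the depth. -/
theorem depthGE_iff_of_stellar {K K' : SComplex U} {F : Finset U} {v : U}
    (hv : ∀ G ∈ K.faces, v ∉ G) (hF : F.Nonempty) (hvF : v ∉ F)
    (hK' : ∀ G, G ∈ K'.faces ↔
      G.erase v ∈ K.faces ∧ (v ∈ G → G.erase v ∪ F ∈ K.faces) ∧ ¬ F ⊆ G) {d : ℕ} :
    DepthGE k K d ↔ DepthGE k K' d := by
  classical
  let Y : SComplex U := ⟨univ.filter fun G => G.erase v ∪ F ∈ K.faces, fun s t hs hts => by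
    simp only [mem_filter, mem_univ, true_and] at hs ⊢
    exact K.down_closed hs (union_subset_union_left (erase_subset_erase v hts))⟩
  let K'' : SComplex U := ⟨univ.filter fun G => G.erase v ∈ K.faces ∧
      (v ∈ G → G.erase v ∪ F ∈ K.faces), fun s t hs hts => by
    simp only [mem_filter, mem_univ, true_and] at hs ⊢
    exact ⟨K.down_closed hs.1 (erase_subset_erase v hts), fun h => K.down_closed (hs.2 (hts h))
      (union_subset_union_left (erase_subset_erase v hts))⟩⟩
  have hY : ∀ G, G ∈ Y.faces ↔ G.erase v ∪ F ∈ K.faces := by simp [Y]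
  have hK'' : ∀ G, G ∈ K''.faces ↔ G.erase v ∈ K.faces ∧ (v ∈ G → G.erase v ∪ F ∈ K.faces) := by
    simp [K'']
  have hFe : F.erase v = F := erase_eq_of_notMem hvF
  have hA₁ : ∀ G, G ∈ Y.faces ↔ G ∪ {v} ∈ K''.faces := by
    intro G
    rw [hY, hK'', erase_union_distrib]
    simp only [erase_singleton, union_empty, mem_union, mem_singleton, or_true, true_imp_iff]
    exact (and_iff_right_of_imp fun h => K.down_closed h subset_union_left).symm
  have hA₂ : ∀ G, G ∈ Y.faces ↔ G ∪ F ∈ K''.faces := by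
    intro G
    rw [hY, hK'', erase_union_distrib, hFe, union_assoc, union_self]
    exact (and_iff_left_of_imp fun h _ => h).symm
  have hC₁ : ∀ G, G ∈ K.faces ↔ G ∈ K''.faces ∧ ¬ {v} ⊆ G := by
    intro G
    rw [hK'', singleton_subset_iff]
    constructor
    · intro h
      have := hv G h
      rw [erase_eq_of_notMem this]
      exact ⟨⟨h, fun h' => absurd h' this⟩, this⟩
    · rintro ⟨⟨h, -⟩, h'⟩
      rwa [erase_eq_of_notMem h'] at h
  have hC₂ : ∀ G, G ∈ K'.faces ↔ G ∈ K''.faces ∧ ¬ F ⊆ G := by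
    intro G
    rw [hK', hK'', and_assoc]
  have hY₁ : DepthGE k K d → DepthGE k Y (d + 1) := by
    intro h
    refine DepthGE.cone (v := v) (fun G hG => ?_) ?_
    · rw [hY] at hG ⊢
      simpa [erase_union_distrib] using hG
    · have : Y.antistar {v} = K.star F := ext_faces fun G => by
        rw [mem_antistar_singleton, mem_star, hY, singleton_subset_iff]
        constructor
        · rintro ⟨h1, h2⟩
          rwa [erase_eq_of_notMem h2] at h1
        · intro h1
          have h2 : v ∉ G := fun h2 => hv _ h1 (mem_union_left _ h2)
          rw [erase_eq_of_notMem h2]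
          exact ⟨h1, h2⟩
      rw [this]
      exact h.star F
  have hY₂ : DepthGE k K' d → DepthGE k Y (d + 1) := by
    intro h
    obtain ⟨w, hw⟩ := hF
    have hwv : w ≠ v := fun h => hvF (h ▸ hw)
    refine DepthGE.cone (v := w) (fun G hG => ?_) ?_
    · rw [hY] at hG ⊢
      have : (G ∪ {w}).erase v ∪ F = G.erase v ∪ F := by
        ext x
        simp only [mem_union, mem_erase, mem_singleton]
        constructor
        · rintro (⟨h1, h2 | rfl⟩ | h3)
          exacts [.inl ⟨h1, h2⟩, .inr hw, .inr h3]
        · rintro (⟨h1, h2⟩ | h3)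
          exacts [.inl ⟨h1, .inl h2⟩, .inr h3]
      rwa [this]
    · have : Y.antistar {w} = K'.star (insert v (F.erase w)) := ext_faces fun G => by
        rw [mem_antistar_singleton, mem_star, hY, singleton_subset_iff, hK']
        have h1 : (G ∪ insert v (F.erase w)).erase v = G.erase v ∪ F.erase w := by
          ext x
          simp only [mem_union, mem_erase, mem_insert]
          constructor
          · rintro ⟨h1, h2 | h2 | h2⟩
            exacts [.inl ⟨h1, h2⟩, absurd h2 h1, .inr h2]
          · rintro (h | h)
            exacts [⟨h.1, .inl h.2⟩, ⟨fun h' => hvF (h' ▸ h.2), .inr (.inr h)⟩]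
        have h2 : G.erase v ∪ F.erase w ∪ F = G.erase v ∪ F := by
          rw [union_assoc, union_eq_right.2 (erase_subset w F)]
        have h3 : F ⊆ G ∪ insert v (F.erase w) ↔ w ∈ G := by
          constructor
          · intro h
            have := h hw
            simpa [hwv] using this
          · intro h x hx
            by_cases hxw : x = w
            · exact mem_union_left _ (hxw ▸ h)
            · exact mem_union_right _ (mem_insert_of_mem (mem_erase.2 ⟨hxw, hx⟩))
        rw [h1, h2, h3]
        constructor
        · rintro ⟨h, hwG⟩
          exact ⟨K.down_closed h (union_subset_union_right (erase_subset w F)), fun _ => h, hwG⟩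
        · rintro ⟨-, h, hwG⟩
          exact ⟨h (by simp), hwG⟩
      rw [this]
      exact h.star _
  have hmono : DepthGE k Y (d + 1) → DepthGE k Y d := fun h i hi => h i (by omega)
  constructor
  · intro h
    exact DepthGE.right hA₂ hC₂ (DepthGE.middle hA₁ hC₁ (hmono (hY₁ h)) h) (hY₁ h)
  · intro h
    exact DepthGE.right hA₁ hC₁ (DepthGE.middle hA₂ hC₂ (hmono (hY₂ h)) h) (hY₂ h)

end SComplex

/-! ### Change of vertex set -/

namespace SComplex

variable {k : Type} [Field k]

section Transport

variable {V W : Type} [DecidableEq V] [DecidableEq W] {f : V → W}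

theorem signedD_image (hf : Function.Injective f) (o : W → ℕ) (φ : Finset W → k)
    (σ : Finset V) :
    signedD (koszulSign o) φ (σ.image f) =
      signedD (koszulSign (o ∘ f)) (fun τ => φ (τ.image f)) σ := by
  rw [signedD, signedD, sum_image hf.injOn]
  refine sum_congr rfl fun v _ => ?_
  rw [image_erase hf, koszulSign_eq_prod, koszulSign_eq_prod, prod_image hf.injOn]
  rfl

theorem cochainVanish_iff_of_image (hf : Function.Injective f) (o : W → ℕ) {K : SComplex V}
    {L : SComplex W} (hL : L.faces = K.faces.image (image f)) {i : ℕ} :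
    CochainVanish k (koszulSign (o ∘ f)) K i ↔ CochainVanish k (koszulSign o) L i := by
  have himg : Function.Injective (image f) := image_injective hf
  have hext : ∀ (φ : Finset V → k) (σ : Finset V),
      Function.extend (image f) φ 0 (σ.image f) = φ σ := fun φ σ => himg.extend_apply φ 0 σ
  constructor
  · intro h φ hφ
    obtain ⟨ψ, hψ⟩ := h (fun τ => φ (τ.image f)) (fun σ hσ hi => by
      rw [← signedD_image hf]
      exact hφ _ (hL ▸ mem_image_of_mem _ hσ) (by rw [card_image_of_injective _ hf, hi]))
    refine ⟨Function.extend (image f) ψ 0, fun σ hσ hi => ?_⟩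
    rw [hL] at hσ
    obtain ⟨τ, hτ, rfl⟩ := mem_image.1 hσ
    rw [card_image_of_injective _ hf] at hi
    rw [signedD_image hf]
    simp only [hext]
    exact hψ τ hτ hi
  · intro h φ hφ
    obtain ⟨ψ, hψ⟩ := h (Function.extend (image f) φ 0) (fun σ hσ hi => by
      rw [hL] at hσ
      obtain ⟨τ, hτ, rfl⟩ := mem_image.1 hσ
      rw [card_image_of_injective _ hf] at hi
      rw [signedD_image hf]
      simp only [hext]
      exact hφ τ hτ hi)
    refine ⟨fun τ => ψ (τ.image f), fun σ hσ hi => ?_⟩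
    have := hψ _ (hL ▸ mem_image_of_mem _ hσ) (by rw [card_image_of_injective _ hf, hi])
    rwa [hext, signedD_image hf] at this

variable [Fintype V] [Fintype W]

theorem srDepth_eq_of_image (hf : Function.Injective f) {K : SComplex V} {L : SComplex W}
    (hL : L.faces = K.faces.image (image f)) (hK : ∅ ∈ K.faces) : srDepth k K = srDepth k L := by
  have hL0 : ∅ ∈ L.faces := hL ▸ mem_image.2 ⟨∅, hK, image_empty f⟩
  rw [srDepth_eq_sInf_hVanish (arbIndex_injective (V := W)) (fun σ _ => hf.injOn) hK,
    srDepth_eq_sInf_hVanish (arbIndex_injective (V := W)) (fun σ _ => Set.injOn_id _) hL0]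
  congr 1
  ext n
  simp only [Set.mem_ofPred_eq]
  refine exists₂_congr fun i S => and_congr_right fun _ => not_congr ?_
  rw [hVanish_iff_cochainVanish, hVanish_iff_cochainVanish,
    cochainVanish_koszulSign_iff (fun σ _ => arbIndex_injective.injOn)
      (fun σ _ => (arbIndex_injective.comp hf).injOn)]
  refine cochainVanish_iff_of_image hf _ ?_
  ext τ
  rw [mem_restrict, hL, mem_image, mem_image]
  simp only [mem_restrict]
  constructor
  · rintro ⟨⟨σ, hσ, rfl⟩, h⟩
    refine ⟨σ, ⟨hσ, fun v hv => ?_⟩, rfl⟩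
    simpa using h (mem_image_of_mem f hv)
  · rintro ⟨σ, ⟨hσ, h⟩, rfl⟩
    refine ⟨⟨σ, hσ, rfl⟩, fun w hw => ?_⟩
    obtain ⟨v, hv, rfl⟩ := mem_image.1 hw
    simpa using h hv

end Transport

/-! ### Barycentric subdivision by stellar subdivisions -/

section Barycentric

variable {V : Type} [DecidableEq V] [Fintype V]

/-- The vertices `x` whose singleton belongs to `C`. -/
def singletonPart (C : Finset (Finset V)) : Finset V := {x | {x} ∈ C}

theorem mem_singletonPart {C : Finset (Finset V)} {x : V} : x ∈ singletonPart C ↔ {x} ∈ C := by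
  simp [singletonPart]

open scoped Classical in
/-- The complex obtained from `K` by starring all the faces in `N`, a family of faces of
cardinality at least `2` closed under passing to larger faces. -/
noncomputable def partialSubdivision (K : SComplex V) (N : Finset (Finset V)) :
    SComplex (Finset V) where
  faces := univ.filter fun C => (∀ s ∈ C, #s = 1 ∨ s ∈ N) ∧
    (∀ s ∈ C, ∀ t ∈ C, s ∈ N → t ∈ N → s ⊆ t ∨ t ⊆ s) ∧
    (∀ t ∈ C, t ∈ N → singletonPart C ⊆ t) ∧
    singletonPart C ∈ K.faces ∧ ∀ s ∈ N, ¬ s ⊆ singletonPart C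
  down_closed := by
    intro C D hC hD
    have hp : singletonPart D ⊆ singletonPart C := fun x hx =>
      mem_singletonPart.2 (hD (mem_singletonPart.1 hx))
    simp only [mem_filter, mem_univ, true_and] at hC ⊢
    obtain ⟨h1, h2, h3, h4, h6⟩ := hC
    exact ⟨fun s hs => h1 s (hD hs), fun s hs t ht => h2 s (hD hs) t (hD ht),
      fun t ht htN => hp.trans (h3 t (hD ht) htN), K.down_closed h4 hp,
      fun s hs h => h6 s hs (h.trans hp)⟩

theorem mem_partialSubdivision {K : SComplex V} {N : Finset (Finset V)}
    {C : Finset (Finset V)} : C ∈ (K.partialSubdivision N).faces ↔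
      (∀ s ∈ C, #s = 1 ∨ s ∈ N) ∧
      (∀ s ∈ C, ∀ t ∈ C, s ∈ N → t ∈ N → s ⊆ t ∨ t ⊆ s) ∧
      (∀ t ∈ C, t ∈ N → singletonPart C ⊆ t) ∧
      singletonPart C ∈ K.faces ∧ ∀ s ∈ N, ¬ s ⊆ singletonPart C := by
  simp [partialSubdivision]

/-- Adding a minimal face to the family of starred faces is a stellar subdivision. -/
theorem mem_partialSubdivision_iff_stellar {K : SComplex V} {N : Finset (Finset V)}
    (hN : ∀ s ∈ N, 2 ≤ #s) (hup : ∀ s ∈ N, ∀ t ∈ K.faces, s ⊆ t → t ∈ N) {F : Finset V}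
    (hF : F ∈ N) (hFK : F ∈ K.faces) (hmin : ∀ s ∈ N, s ⊆ F → s = F) (C : Finset (Finset V)) :
    C ∈ (K.partialSubdivision N).faces ↔
      C.erase F ∈ (K.partialSubdivision (N.erase F)).faces ∧
      (F ∈ C → C.erase F ∪ F.image singleton ∈ (K.partialSubdivision (N.erase F)).faces) ∧
      ¬ F.image singleton ⊆ C := by
  have hF1 : ∀ x, {x} ≠ F := fun x h => by
    have := hN F hF
    rw [← h, card_singleton] at this
    omega
  have hx1 : ∀ x : V, {x} ∉ N := fun x h => by
    have := hN _ h
    rw [card_singleton] at this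
    omega
  have hsub : F.image singleton ⊆ C ↔ F ⊆ singletonPart C := by
    simp [subset_iff, mem_singletonPart]
  have hσ : singletonPart (C.erase F) = singletonPart C := by
    ext x
    rw [mem_singletonPart, mem_singletonPart, mem_erase, and_iff_right (hF1 x)]
  have hσ' : singletonPart (C.erase F ∪ F.image singleton) = singletonPart C ∪ F := by
    ext x
    rw [mem_singletonPart, mem_union, mem_union, ← mem_singletonPart, hσ]
    simp
  have hmemD : ∀ t ∈ C.erase F ∪ F.image singleton, t ∈ N → t ∈ C ∧ t ≠ F := by
    intro t ht htN
    rcases mem_union.1 ht with h | h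
    · exact ⟨mem_of_mem_erase h, ne_of_mem_erase h⟩
    · obtain ⟨x, -, rfl⟩ := mem_image.1 h
      exact absurd htN (hx1 x)
  rw [hsub]
  simp only [mem_partialSubdivision, hσ, hσ']
  constructor
  · rintro ⟨h1, h2, h3, h4, h5⟩
    refine ⟨⟨fun s hs => ?_, fun s hs t ht hsN htN => ?_, fun t ht htN => ?_, h4,
      fun s hs => h5 s (mem_of_mem_erase hs)⟩, fun hFC => ?_, h5 F hF⟩
    · obtain ⟨hsF, hs⟩ := mem_erase.1 hs
      exact (h1 s hs).imp_right fun h => mem_erase.2 ⟨hsF, h⟩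
    · exact h2 s (mem_of_mem_erase hs) t (mem_of_mem_erase ht) (mem_of_mem_erase hsN)
        (mem_of_mem_erase htN)
    · exact h3 t (mem_of_mem_erase ht) (mem_of_mem_erase htN)
    · rw [union_eq_right.2 (h3 F hFC hF)]
      refine ⟨fun s hs => ?_, fun s hs t ht hsN htN => ?_, fun t ht htN => ?_, hFK,
        fun s hs h => ?_⟩
      · rcases mem_union.1 hs with h | h
        · obtain ⟨hsF, hs⟩ := mem_erase.1 h
          exact (h1 s hs).imp_right fun h => mem_erase.2 ⟨hsF, h⟩
        · obtain ⟨x, -, rfl⟩ := mem_image.1 h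
          exact .inl (card_singleton x)
      · exact h2 s (hmemD s hs (mem_of_mem_erase hsN)).1 t (hmemD t ht (mem_of_mem_erase htN)).1
          (mem_of_mem_erase hsN) (mem_of_mem_erase htN)
      · have htN := mem_of_mem_erase htN
        obtain ⟨htC, htF⟩ := hmemD t ht htN
        exact (h2 F hFC t htC hF htN).resolve_right fun h => htF (hmin t htN h)
      · exact ne_of_mem_erase hs (hmin s (mem_of_mem_erase hs) h)
  · rintro ⟨⟨h1, h2, h3, h4, h5⟩, hD, hFC⟩
    have hFt : F ∈ C → ∀ t ∈ C, t ∈ N → F ⊆ t := by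
      intro hF' t ht htN
      by_cases htF : t = F
      · exact htF.ge
      · exact subset_union_right.trans ((hD hF').2.2.1 t
          (mem_union_left _ (mem_erase.2 ⟨htF, ht⟩)) (mem_erase.2 ⟨htF, htN⟩))
    refine ⟨fun s hs => ?_, fun s hs t ht hsN htN => ?_, fun t ht htN => ?_, h4,
      fun s hs h => ?_⟩
    · by_cases hsF : s = F
      · exact .inr (hsF ▸ hF)
      · exact (h1 s (mem_erase.2 ⟨hsF, hs⟩)).imp_right mem_of_mem_erase
    · by_cases hsF : s = F
      · subst hsF
        exact .inl (hFt hs t ht htN)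
      by_cases htF : t = F
      · subst htF
        exact .inr (hFt ht s hs hsN)
      exact h2 s (mem_erase.2 ⟨hsF, hs⟩) t (mem_erase.2 ⟨htF, ht⟩) (mem_erase.2 ⟨hsF, hsN⟩)
        (mem_erase.2 ⟨htF, htN⟩)
    · by_cases htF : t = F
      · subst htF
        obtain ⟨-, -, -, h8, h9⟩ := hD ht
        have h10 := hup t hF _ h8 subset_union_right
        by_contra hcon
        refine h9 _ (mem_erase.2 ⟨fun h => hcon (union_eq_right.1 h), h10⟩) subset_rfl
      · exact h3 t (mem_erase.2 ⟨htF, ht⟩) (mem_erase.2 ⟨htF, htN⟩)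
    · by_cases hsF : s = F
      · exact hFC (hsF ▸ h)
      · exact h5 s (mem_erase.2 ⟨hsF, hs⟩) h

theorem depthGE_partialSubdivision {K : SComplex V} {d : ℕ} (n : ℕ) :
    ∀ N : Finset (Finset V), #N = n → (∀ s ∈ N, s ∈ K.faces ∧ 2 ≤ #s) →
      (∀ s ∈ N, ∀ t ∈ K.faces, s ⊆ t → t ∈ N) →
      (DepthGE k (K.partialSubdivision ∅) d ↔ DepthGE k (K.partialSubdivision N) d) := by
  induction n with
  | zero =>
    intro N hN _ _
    rw [card_eq_zero.1 hN]
  | succ n ih =>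
    intro N hcard hN hup
    obtain ⟨F, hF, hmin⟩ := exists_min_image N card (card_pos.1 (by omega))
    have hmin' : ∀ s ∈ N, s ⊆ F → s = F := fun s hs h => eq_of_subset_of_card_le h (hmin s hs)
    rw [ih (N.erase F) (by rw [card_erase_of_mem hF, hcard]; rfl)
      (fun s hs => hN s (mem_of_mem_erase hs)) (fun s hs t ht hst => mem_erase.2 ⟨fun h =>
        ne_of_mem_erase hs (hmin' s (mem_of_mem_erase hs) (h ▸ hst)),
        hup s (mem_of_mem_erase hs) t ht hst⟩)]
    have hF2 := (hN F hF).2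
    refine depthGE_iff_of_stellar (F := F.image singleton) (v := F) (fun C hC hFC => ?_) ?_ ?_
      (mem_partialSubdivision_iff_stellar (fun s hs => (hN s hs).2) hup hF (hN F hF).1 hmin')
    · rcases (mem_partialSubdivision.1 hC).1 F hFC with h | h
      · omega
      · exact notMem_erase _ _ h
    · exact (card_pos.1 (by omega)).image _
    · intro h
      obtain ⟨x, -, hx⟩ := mem_image.1 h
      rw [← hx, card_singleton] at hF2
      omega

theorem partialSubdivision_empty_faces (K : SComplex V) :
    (K.partialSubdivision ∅).faces = K.faces.image (image singleton) := by
  ext C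
  rw [mem_partialSubdivision, mem_image]
  constructor
  · rintro ⟨h1, -, -, h4, -⟩
    refine ⟨_, h4, ?_⟩
    ext s
    simp only [mem_image, mem_singletonPart]
    constructor
    · rintro ⟨x, hx, rfl⟩
      exact hx
    · intro hs
      obtain ⟨x, rfl⟩ := card_eq_one.1 ((h1 s hs).resolve_right (notMem_empty s))
      exact ⟨x, hs, rfl⟩
  · rintro ⟨σ, hσ, rfl⟩
    have : singletonPart (σ.image singleton) = σ := by
      ext x
      simp [mem_singletonPart]
    rw [this]
    refine ⟨fun s hs => ?_, by simp, by simp, hσ, by simp⟩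
    obtain ⟨x, -, rfl⟩ := mem_image.1 hs
    exact .inl (card_singleton x)

theorem mem_partialSubdivision_top {K : SComplex V} (hK : ∅ ∈ K.faces)
    {C : Finset (Finset V)} :
    C ∈ (K.partialSubdivision {s ∈ K.faces | 2 ≤ #s}).faces ↔
      (∀ s ∈ C, s ∈ K.faces ∧ s ≠ ∅) ∧ ∀ s ∈ C, ∀ t ∈ C, s ⊆ t ∨ t ⊆ s := by
  rw [mem_partialSubdivision]
  simp only [mem_filter]
  constructor
  · rintro ⟨h1, h2, h3, h4, h5⟩
    have hx : ∀ s ∈ C, #s = 1 → ∃ x, s = {x} ∧ x ∈ singletonPart C := by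
      intro s hs h
      obtain ⟨x, rfl⟩ := card_eq_one.1 h
      exact ⟨x, rfl, mem_singletonPart.2 hs⟩
    refine ⟨fun s hs => ?_, fun s hs t ht => ?_⟩
    · rcases h1 s hs with h | h
      · obtain ⟨x, rfl, hx⟩ := hx s hs h
        exact ⟨K.down_closed h4 (singleton_subset_iff.2 hx), singleton_ne_empty x⟩
      · exact ⟨h.1, fun h' => by simp [h'] at h⟩
    · rcases h1 s hs with h | h <;> rcases h1 t ht with h' | h'
      · obtain ⟨x, rfl, hx'⟩ := hx s hs h
        obtain ⟨y, rfl, hy⟩ := hx t ht h'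
        have hlt : ¬ 2 ≤ #(singletonPart C) := fun h => h5 _ ⟨h4, h⟩ subset_rfl
        rw [card_le_one_iff.1 (by omega : #(singletonPart C) ≤ 1) hx' hy]
        exact .inl subset_rfl
      · obtain ⟨x, rfl, hx⟩ := hx s hs h
        exact .inl (singleton_subset_iff.2 (h3 t ht h' hx))
      · obtain ⟨x, rfl, hx⟩ := hx t ht h'
        exact .inr (singleton_subset_iff.2 (h3 s hs h hx))
      · exact h2 s hs t ht h h'
  · rintro ⟨h1, h2⟩
    have hone : #(singletonPart C) ≤ 1 := by
      refine card_le_one_iff.2 fun hx hy => ?_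
      rw [mem_singletonPart] at hx hy
      rcases h2 _ hx _ hy with h | h
      · exact singleton_subset_singleton.1 h
      · exact (singleton_subset_singleton.1 h).symm
    refine ⟨fun s hs => ?_, fun s hs t ht _ _ => h2 s hs t ht, fun t ht htN x hx => ?_, ?_,
      fun s hs h => ?_⟩
    · have := card_pos.2 (nonempty_iff_ne_empty.2 (h1 s hs).2)
      by_cases h : #s = 1
      · exact .inl h
      · exact .inr ⟨(h1 s hs).1, by omega⟩
    · rcases h2 _ (mem_singletonPart.1 hx) t ht with h | h
      · exact singleton_subset_iff.1 h
      · have := card_le_card h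
        rw [card_singleton] at this
        omega
    · rcases (singletonPart C).eq_empty_or_nonempty with h | h
      · rwa [h]
      · obtain ⟨x, hx⟩ := card_eq_one.1 (le_antisymm hone (card_pos.2 h))
        have hxC : x ∈ singletonPart C := by rw [hx]; exact mem_singleton_self x
        rw [hx]
        exact (h1 _ (mem_singletonPart.1 hxC)).1
    · have := card_le_card h
      omega

theorem partialSubdivision_top_faces {K : SComplex V} (hK : ∅ ∈ K.faces) :
    (K.partialSubdivision {s ∈ K.faces | 2 ≤ #s}).faces =
      (orderComplex K.FacePoset).faces.image (image Subtype.val) := by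
  ext C
  rw [mem_partialSubdivision_top hK, mem_image]
  constructor
  · rintro ⟨h1, h2⟩
    refine ⟨C.subtype (fun s => s ∈ K.faces ∧ s ≠ ∅), ?_, ?_⟩
    · simp only [orderComplex, mem_filter, mem_univ, true_and, mem_subtype]
      exact fun a ha b hb => h2 a ha b hb
    · ext s
      simp only [mem_image, mem_subtype]
      constructor
      · rintro ⟨t, ht, rfl⟩
        exact ht
      · exact fun hs => ⟨⟨s, h1 s hs⟩, hs, rfl⟩
  · rintro ⟨D, hD, rfl⟩
    simp only [orderComplex, mem_filter, mem_univ, true_and] at hD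
    refine ⟨fun s hs => ?_, fun s hs t ht => ?_⟩
    · obtain ⟨a, -, rfl⟩ := mem_image.1 hs
      exact a.2
    · obtain ⟨a, ha, rfl⟩ := mem_image.1 hs
      obtain ⟨b, hb, rfl⟩ := mem_image.1 ht
      exact hD a ha b hb

theorem empty_mem_partialSubdivision {K : SComplex V} (hK : ∅ ∈ K.faces)
    {N : Finset (Finset V)} (hN : ∀ s ∈ N, 2 ≤ #s) : ∅ ∈ (K.partialSubdivision N).faces := by
  have : singletonPart (∅ : Finset (Finset V)) = ∅ := by ext x; simp [mem_singletonPart]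
  rw [mem_partialSubdivision, this]
  refine ⟨by simp, by simp, by simp, hK, fun s hs h => ?_⟩
  have := hN s hs
  rw [subset_empty.1 h, card_empty] at this
  omega

/-- Passing to the barycentric subdivision does not change the depth. -/
theorem srDepth_orderComplex_facePoset (K : SComplex V) (hK : ∅ ∈ K.faces) :
    srDepth k K = srDepth k (orderComplex K.FacePoset) := by
  have h1 : srDepth k K = srDepth k (K.partialSubdivision ∅) :=
    srDepth_eq_of_image singleton_injective K.partialSubdivision_empty_faces hK
  have h2 : srDepth k (orderComplex K.FacePoset) =
      srDepth k (K.partialSubdivision {s ∈ K.faces | 2 ≤ #s}) :=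
    srDepth_eq_of_image Subtype.val_injective (partialSubdivision_top_faces hK)
      empty_mem_orderComplex
  rw [h1, h2, srDepth_eq_sSup_depthGE (empty_mem_partialSubdivision hK (by simp)),
    srDepth_eq_sSup_depthGE (empty_mem_partialSubdivision hK (by simp))]
  have h3 : ∀ d, DepthGE k (K.partialSubdivision ∅) d ↔
      DepthGE k (K.partialSubdivision {s ∈ K.faces | 2 ≤ #s}) d := fun d => by
    apply depthGE_partialSubdivision (#{s ∈ K.faces | 2 ≤ #s}) {s ∈ K.faces | 2 ≤ #s} rfl
    · simp
    · intro s hs t ht hst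
      rw [mem_filter] at hs ⊢
      exact ⟨ht, hs.2.trans (card_le_card hst)⟩
  simp only [h3]

end Barycentric

theorem srDepth_of_empty_notMem {V : Type} [DecidableEq V] {K : SComplex V}
    (hK : ∅ ∉ K.faces) : srDepth k K = 0 := by
  have hs : Subsingleton (SRRing k K) := by
    rw [Ideal.Quotient.subsingleton_iff, Ideal.eq_top_iff_one, mem_srIdeal]
    exact fun m _ hm => hK (K.down_closed hm (empty_subset _))
  rw [srDepth, depthIn, Set.eq_empty_of_forall_notMem (s := {n | _}), csSup_empty, bot_eq_zero]
  rintro n ⟨rs, -, -, hreg⟩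
  exact hreg.2 (Subsingleton.elim _ _)

end SComplex

/-- For a finite poset `P`,
`depth k[O(P)] = min { i + |S| : S ⊆ {1, …, ht P}, H̃_{i-1}(O(P̃_S); k) ≠ 0 }`, where `P̃_S` is
the subposet of elements whose height is not in `S`.  In particular, for any simplicial complex
`Δ`, applying this formula to the face poset of `Δ` computes `depth k[Δ]`. -/
theorem poset_depth_formula (k : Type) [Field k] :
    (∀ (P : Type) [DecidableEq P] [Fintype P] [PartialOrder P]
        [∀ a b : P, Decidable (a ≤ b)],
      SComplex.srDepth k (orderComplex P) = sInf {n : ℕ | ∃ (i : ℕ) (S : Finset ℕ),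
        S ⊆ Finset.Icc 1 (pheightMax P) ∧ n = i + S.card ∧
        ¬ SComplex.HVanish k
          ((orderComplex P).restrict (Finset.univ.filter fun p => pheight p ∉ S)) i})
    ∧ (∀ (V : Type) [DecidableEq V] [Fintype V] (K : SComplex V),
      SComplex.srDepth k K = sInf {n : ℕ | ∃ (i : ℕ) (S : Finset ℕ),
        S ⊆ Finset.Icc 1 (pheightMax K.FacePoset) ∧ n = i + S.card ∧
        ¬ SComplex.HVanish k
          ((orderComplex K.FacePoset).restrict
            (Finset.univ.filter fun p => pheight p ∉ S)) i}) := by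
  refine ⟨fun P _ _ _ _ => srDepth_orderComplex k, fun V _ _ K => ?_⟩
  by_cases hK : ∅ ∈ K.faces
  · rw [SComplex.srDepth_orderComplex_facePoset K hK]
    exact srDepth_orderComplex k
  · rw [SComplex.srDepth_of_empty_notMem hK]
    have hempty : IsEmpty K.FacePoset :=
      ⟨fun s => hK (K.down_closed s.2.1 (empty_subset _))⟩
    symm
    rw [← Nat.le_zero]
    refine Nat.sInf_le ⟨0, ∅, empty_subset _, rfl, SComplex.not_hVanish_zero_of_faces_eq ?_⟩
    ext C
    rw [SComplex.mem_restrict, mem_singleton, eq_empty_of_isEmpty C]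
    exact ⟨fun _ => rfl, fun _ => ⟨empty_mem_orderComplex, empty_subset _⟩⟩
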